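/- Let n ≥ 2 be an integer, θ ∈ (0, π/2) and 1 ≤ k < n. Define ℓ : C_θ → ℝ by ℓ(ζ) := sin²θ − cos θ · ζ_{n+1} (the capillary support function of the unit spherical cap). Suppose φ : C_θ → (0,∞) is smooth with τ[φ^{−1/k}] ≥ 0, φ^{−1/k} a capillary function, and ∫_{C_θ} φ(ζ) ζ_i dσ(ζ) = 0 for all i = 1,…,n. Then for every t ∈ [0,1] there exists a vector z_t ∈ ℝ^{n+1} with ⟨z_t, E_{n+1}⟩ = 0 such that, setting f_t(ζ) := (1−t)ℓ(ζ) + t·φ(ζ)^{−1/k} − ⟨ζ, z_t⟩ and φ_t := f_t^{−k}, the following hold: f_t > 0 on C_θ; τ[f_t] ≥ 0; f_t is a capillary function; and ∫_{C_θ} φ_t(ζ) ζ_i dσ(ζ) = 0 for all i = 1,…,n. Moreover z_0 = 0, z_1 = 0, and there is a constant C ≥ 1 such that 1/C ≤ φ_t(ζ) ≤ C for all t ∈ [0,1] and all ζ ∈ C_θ. -/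

import Mathlib

open MeasureTheory Real Set
open scoped RealInnerProductSpace

noncomputable section

abbrev V (n : ℕ) := EuclideanSpace ℝ (Fin (n + 1))

/-- The vertical unit vector `E_{n+1}`. -/
def Etop (n : ℕ) : V n := EuclideanSpace.single (Fin.last n) 1

/-- The spherical cap `S^n_θ`. -/
def sphCap (n : ℕ) (θ : ℝ) : Set (V n) :=
  {u | ‖u‖ = 1 ∧ Real.cos θ ≤ u (Fin.last n)}

/-- The boundary circle `∂S^n_θ`. -/
def sphCapBdry (n : ℕ) (θ : ℝ) : Set (V n) :=
  {u | ‖u‖ = 1 ∧ u (Fin.last n) = Real.cos θ}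

/-- The capillary cap `C_θ`. -/
def capCap (n : ℕ) (θ : ℝ) : Set (V n) :=
  {ζ | 0 ≤ ζ (Fin.last n) ∧ ‖ζ + Real.cos θ • Etop n‖ = 1}

/-- The open cone over `S^n_θ`. -/
def coneCap (n : ℕ) (θ : ℝ) : Set (V n) :=
  {x | ∃ l : ℝ, 0 < l ∧ ∃ u ∈ sphCap n θ, x = l • u}

/-- `G` is a positively 1-homogeneous extension of `g : C_θ → ℝ` which is `C^m` on an
open neighborhood of the cone over `S^n_θ`. -/
def IsHomExt (n : ℕ) (θ : ℝ) (m : ℕ∞) (g G : V n → ℝ) : Prop :=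
  (∃ U : Set (V n), IsOpen U ∧ coneCap n θ ⊆ U ∧ ContDiffOn ℝ m G U) ∧
  (∀ l : ℝ, 0 < l → ∀ u ∈ sphCap n θ, G (l • u) = l * G u) ∧
  (∀ ζ ∈ capCap n θ, G (ζ + Real.cos θ • Etop n) = g ζ)

/-- The Hessian of `G` at `u` as a quadratic/bilinear form. -/
def hessQ (n : ℕ) (G : V n → ℝ) (u v w : V n) : ℝ :=
  fderiv ℝ (fderiv ℝ G) u v w

/-- The Hessian matrix `D²G(u)` in the standard coordinates. -/
def hessM (n : ℕ) (G : V n → ℝ) (u : V n) : Matrix (Fin (n + 1)) (Fin (n + 1)) ℝ :=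
  fun i j => fderiv ℝ (fderiv ℝ G) u (EuclideanSpace.single i 1) (EuclideanSpace.single j 1)

/-- `σ_j` of the eigenvalues of `D²G(u)` (via characteristic polynomial coefficients). -/
def sigmaElem (n : ℕ) (j : ℕ) (G : V n → ℝ) (u : V n) : ℝ :=
  (-1 : ℝ) ^ j * ((hessM n G u).charpoly.coeff (n + 1 - j))

/-- `τ[g] ≥ 0` : the Hessian of the extension is positive semidefinite on `S^n_θ`. -/
def TauNonneg (n : ℕ) (θ : ℝ) (G : V n → ℝ) : Prop :=
  ∀ u ∈ sphCap n θ, ∀ v : V n, 0 ≤ hessQ n G u v v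

/-- `τ[g] > 0`. -/
def TauPos (n : ℕ) (θ : ℝ) (G : V n → ℝ) : Prop :=
  TauNonneg n θ G ∧
  ∀ u ∈ sphCap n θ, ∀ v : V n, v ≠ 0 → ⟪v, u⟫ = 0 → 0 < hessQ n G u v v

/-- Capillary (Robin) boundary condition: `∂_{n+1}G = 0` on `∂S^n_θ`. -/
def IsCapillaryF (n : ℕ) (θ : ℝ) (G : V n → ℝ) : Prop :=
  ∀ u ∈ sphCapBdry n θ, fderiv ℝ G u (Etop n) = 0

/-- Reflection negating the horizontal coordinates. -/
def horizNeg (n : ℕ) (ζ : V n) : V n := (2 * ζ (Fin.last n)) • Etop n - ζ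

/-- Support function of a set. -/
def suppFn (n : ℕ) (K : Set (V n)) (u : V n) : ℝ := sSup ((fun y => ⟪u, y⟫) '' K)

/-- Relative interior (within the hyperplane `{x_{n+1}=0}`) of the base `K ∩ {x_{n+1}=0}`. -/
def relintBase (n : ℕ) (K : Set (V n)) : Set (V n) :=
  {x | x (Fin.last n) = 0 ∧ ∃ ε > 0, ∀ y : V n, y (Fin.last n) = 0 → ‖y - x‖ < ε → y ∈ K}

/-- A `θ`-capillary convex body. -/
def IsCapBody (n : ℕ) (θ : ℝ) (K : Set (V n)) : Prop :=
  IsCompact K ∧ Convex ℝ K ∧ (interior K).Nonempty ∧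
  (∀ x ∈ K, 0 ≤ x (Fin.last n)) ∧
  (∀ x ∈ K, 0 < x (Fin.last n) → ∀ u : V n, ‖u‖ = 1 → ⟪u, x⟫ = suppFn n K u →
    Real.cos θ ≤ u (Fin.last n)) ∧
  (∀ v : V n, ‖v‖ = 1 → v (Fin.last n) = 0 →
    suppFn n K (Real.sin θ • v + Real.cos θ • Etop n) = Real.sin θ * suppFn n K v) ∧
  (relintBase n K).Nonempty

/-- `ψ` is one of `x²`, `x^p (p<0)`, `-log x`. -/
def PsiOK (ψ : ℝ → ℝ) : Prop :=
  (ψ = fun x : ℝ => x ^ 2) ∨ (∃ p : ℝ, p < 0 ∧ ψ = fun x : ℝ => x ^ p) ∨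
    (ψ = fun x : ℝ => -Real.log x)


/-!
A minimiser of the convex functional `z ↦ ∫ F (f_t - ⟪·, z⟫)`, where `-F` is a primitive of
`s ^ (-k)` frozen below a level `ε`, over the floor of the capillary body with support function
`f_t` yields a translate balanced for the truncated power. On the boundary of the floor the
first-order condition alone is only one-sided; reflecting the cap in vertical hyperplanes turns it
into balance.

The same reflection shows that a translate of `f_t` with a zero on the cap cannot be a limit of
balanced translates: some direction has a positive first moment. By compactness the balanced
translates have a positive lower bound uniform in `t` and `ε`, so for small `ε` the truncation is
invisible. Convexity enters only through support points: where `D²G ≥ 0`, the gradient of `G` at `u`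
supports the body in direction `u`, and the capillary condition places it in the floor for `u` on
the rim and in the upper half-space for all other `u`.
-/

section InnerProductSpace

variable {E : Type*} [NormedAddCommGroup E] [InnerProductSpace ℝ E]

lemma exists_forall_norm_sq_le_inner {K : Set E} (hne : K.Nonempty) (hcomp : IsComplete K)
    (hconv : Convex ℝ K) : ∃ e ∈ K, ∀ x ∈ K, ‖e‖ ^ 2 ≤ ⟪e, x⟫ := by
  obtain ⟨e, heK, he⟩ := exists_norm_eq_iInf_of_complete_convex hne hcomp hconv 0
  refine ⟨e, heK, fun x hx => ?_⟩
  have h := (norm_eq_iInf_iff_real_inner_le_zero hconv heK).1 he x hx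
  rw [zero_sub, inner_neg_left, inner_sub_right, real_inner_self_eq_norm_sq] at h
  linarith

/-- The reflection in the hyperplane orthogonal to `e`. -/
abbrev mirror (e : E) : E ≃ₗᵢ[ℝ] E := (ℝ ∙ e)ᗮ.reflection

lemma mirror_apply (e u : E) : mirror e u = u - (2 * ⟪u, e⟫ / ‖e‖ ^ 2) • e := by
  rw [Submodule.reflection_orthogonal_apply, Submodule.reflection_singleton_apply,
    real_inner_comm, neg_sub, RCLike.ofReal_real_eq_id, id, mul_div_assoc, two_mul, add_smul,
    two_nsmul]

lemma inner_mirror_self (e u : E) : ⟪mirror e u, e⟫ = -⟪u, e⟫ := by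
  have h := (mirror e).inner_map_map u e
  rw [Submodule.reflection_orthogonalComplement_singleton_eq_neg, inner_neg_right] at h
  linarith

end InnerProductSpace

section CompactlySupportedMeasure

lemma integrable_of_continuousOn_of_ae_mem {X F : Type*} [TopologicalSpace X] [T2Space X]
    [MeasurableSpace X] [OpensMeasurableSpace X] [NormedAddCommGroup F] {μ : Measure X}
    [IsFiniteMeasureOnCompacts μ] {S : Set X} (hS : IsCompact S) (hμ : ∀ᵐ u ∂μ, u ∈ S)
    {q : X → F} (hq : ContinuousOn q S) : Integrable q μ := by
  have h := hq.integrableOn_compact (μ := μ) hS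
  rwa [IntegrableOn, Measure.restrict_eq_self_of_ae_mem hμ] at h

lemma continuous_integral_of_ae_mem {X Y : Type*} [TopologicalSpace X]
    [FirstCountableTopology X] [LocallyCompactSpace X] [TopologicalSpace Y] [MeasurableSpace Y]
    [OpensMeasurableSpace Y] [SecondCountableTopologyEither Y ℝ] {μ : Measure Y}
    [IsLocallyFiniteMeasure μ] {S : Set Y} (hS : IsCompact S) (hμ : ∀ᵐ u ∂μ, u ∈ S)
    {F : X → Y → ℝ} (hF : Continuous F.uncurry) : Continuous fun x => ∫ u, F x u ∂μ := by
  have h := continuous_parametric_integral_of_continuous (μ := μ) hF hS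
  rwa [Measure.restrict_eq_self_of_ae_mem hμ] at h

lemma integral_pos_of_mem_support {X : Type*} [TopologicalSpace X] [MeasurableSpace X]
    {μ : Measure X} {q : X → ℝ} (hq : Continuous q) (hint : Integrable q μ) (hnn : 0 ≤ᵐ[μ] q)
    {u₀ : X} (hu₀ : u₀ ∈ μ.support) (hpos : 0 < q u₀) : 0 < ∫ u, q u ∂μ := by
  rw [integral_pos_iff_support_of_nonneg_ae hnn hint]
  have hnhds : {u | 0 < q u} ∈ nhds u₀ := (isOpen_lt continuous_const hq).mem_nhds hpos
  exact ((Measure.mem_support_iff_forall u₀).1 hu₀ _ hnhds).trans_le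
    (measure_mono fun u hu => ne_of_gt hu)

variable {E : Type*} [NormedAddCommGroup E] [InnerProductSpace ℝ E] [MeasurableSpace E]
  {μ : Measure E} {S : Set E} {e : E} {q : E → ℝ}

lemma ae_sub_mirror_mul_inner_nonneg (hM : MeasurePreserving (mirror e) μ μ)
    (hle : ∀ᵐ u ∂μ, 0 ≤ ⟪u, e⟫ → q (mirror e u) ≤ q u) :
    ∀ᵐ u ∂μ, 0 ≤ (q u - q (mirror e u)) * ⟪u, e⟫ := by
  filter_upwards [hle, hM.quasiMeasurePreserving.ae hle] with u hu hMu
  rcases le_total 0 ⟪u, e⟫ with h | h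
  · exact mul_nonneg (sub_nonneg.2 (hu h)) h
  · rw [inner_mirror_self, Submodule.reflection_reflection] at hMu
    exact mul_nonneg_of_nonpos_of_nonpos (sub_nonpos.2 (hMu (neg_nonneg.2 h))) h

variable [BorelSpace E] [IsFiniteMeasure μ]

lemma two_mul_integral_mul_inner (hS : IsCompact S) (hμ : ∀ᵐ u ∂μ, u ∈ S)
    (hM : MeasurePreserving (mirror e) μ μ) (hq : Continuous q) :
    2 * ∫ u, q u * ⟪u, e⟫ ∂μ = ∫ u, (q u - q (mirror e u)) * ⟪u, e⟫ ∂μ := by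
  have : Continuous fun u => q (mirror e u) := hq.comp (mirror e).continuous
  have h := hM.integral_comp (mirror e).toHomeomorph.measurableEmbedding (fun u => q u * ⟪u, e⟫)
  simp only [inner_mirror_self, mul_neg, integral_neg] at h
  simp only [sub_mul]
  rw [integral_sub
    (integrable_of_continuousOn_of_ae_mem hS hμ (by fun_prop : Continuous _).continuousOn)
    (integrable_of_continuousOn_of_ae_mem hS hμ (by fun_prop : Continuous _).continuousOn)]
  linarith

lemma integral_mul_inner_nonneg_of_mirror_le (hS : IsCompact S) (hμ : ∀ᵐ u ∂μ, u ∈ S)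
    (hM : MeasurePreserving (mirror e) μ μ) (hq : Continuous q)
    (hle : ∀ᵐ u ∂μ, 0 ≤ ⟪u, e⟫ → q (mirror e u) ≤ q u) : 0 ≤ ∫ u, q u * ⟪u, e⟫ ∂μ := by
  have h := integral_nonneg_of_ae (ae_sub_mirror_mul_inner_nonneg hM hle)
  rw [← two_mul_integral_mul_inner hS hμ hM hq] at h
  linarith

lemma integral_mul_inner_pos_of_mirror_le (hS : IsCompact S) (hμ : ∀ᵐ u ∂μ, u ∈ S)
    (hM : MeasurePreserving (mirror e) μ μ) (hq : Continuous q)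
    (hle : ∀ᵐ u ∂μ, 0 ≤ ⟪u, e⟫ → q (mirror e u) ≤ q u) {u₀ : E} (hu₀ : u₀ ∈ μ.support)
    (hpos : 0 < ⟪u₀, e⟫) (hlt : q (mirror e u₀) < q u₀) : 0 < ∫ u, q u * ⟪u, e⟫ ∂μ := by
  have : Continuous fun u => q (mirror e u) := hq.comp (mirror e).continuous
  have hc : Continuous fun u => (q u - q (mirror e u)) * ⟪u, e⟫ := by fun_prop
  have h := integral_pos_of_mem_support hc
    (integrable_of_continuousOn_of_ae_mem hS hμ hc.continuousOn)
    (ae_sub_mirror_mul_inner_nonneg hM hle) hu₀ (mul_pos (sub_pos.2 hlt) hpos)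
  rw [← two_mul_integral_mul_inner hS hμ hM hq] at h
  linarith

lemma mul_sub_le_integral_of_antitone {w : ℝ → ℝ} (hw : Antitone w) (a b : ℝ) :
    w a * (a - b) ≤ ∫ x in b..a, w x := by
  rcases le_total b a with h | h
  · have := intervalIntegral.integral_mono_on (μ := volume) h (f := fun _ => w a)
      intervalIntegrable_const hw.intervalIntegrable (fun x hx => hw hx.2)
    rwa [intervalIntegral.integral_const, smul_eq_mul, mul_comm] at this
  · have := intervalIntegral.integral_mono_on (μ := volume) h (g := fun _ => w a)
      hw.intervalIntegrable intervalIntegrable_const (fun x hx => hw hx.1)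
    rw [intervalIntegral.integral_const, smul_eq_mul] at this
    rw [intervalIntegral.integral_symm a b]
    linarith

-- First-order condition for a minimum over `D` of the convex `z ↦ ∫ F (h u - ⟪u, z⟫)`, where `-F`
-- is a primitive of `w`.
lemma exists_forall_integral_mul_inner_sub_nonneg [ProperSpace E] (hS : IsCompact S)
    (hμ : ∀ᵐ u ∂μ, u ∈ S) {D : Set E} (hD : IsCompact D) (hconv : Convex ℝ D)
    (hne : D.Nonempty) {h : E → ℝ} (hh : Continuous h) {w : ℝ → ℝ} (hw : Continuous w)
    (hanti : Antitone w) :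
    ∃ z ∈ D, ∀ y ∈ D, 0 ≤ ∫ u, w (h u - ⟪u, z⟫) * ⟪u, y - z⟫ ∂μ := by
  let F : ℝ → ℝ := fun a => -∫ x in (0 : ℝ)..a, w x
  have hF : Continuous F :=
    (intervalIntegral.continuous_primitive (fun a b => hw.intervalIntegrable a b) 0).neg
  have tangent (a b : ℝ) : F a - F b ≤ -(w a * (a - b)) := by
    have h1 := mul_sub_le_integral_of_antitone hanti a b
    have h2 := intervalIntegral.integral_interval_sub_left (hw.intervalIntegrable 0 a)
      (hw.intervalIntegrable 0 b) (μ := volume)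
    simp only [F]
    linarith
  have integrable {p : E → ℝ} (hp : Continuous p) : Integrable p μ :=
    integrable_of_continuousOn_of_ae_mem hS hμ hp.continuousOn
  obtain ⟨z, hzD, hzmin⟩ := hD.exists_isMinOn hne
    (continuous_integral_of_ae_mem (F := fun z u => F (h u - ⟪u, z⟫)) hS hμ
      (by simp only [Function.uncurry_def]; fun_prop)).continuousOn
  refine ⟨z, hzD, fun y hy => ?_⟩
  let slope : ℝ → ℝ := fun r => ∫ u, w (h u - ⟪u, z + r • (y - z)⟫) * ⟪u, y - z⟫ ∂μ
  have hslope : Continuous slope := continuous_integral_of_ae_mem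
    (F := fun (r : ℝ) u => w (h u - ⟪u, z + r • (y - z)⟫) * ⟪u, y - z⟫) hS hμ
    (by simp only [Function.uncurry_def]; fun_prop)
  have slope_nonneg (r : ℝ) (hr : r ∈ Ioo (0 : ℝ) 1) : 0 ≤ slope r := by
    have hmin := isMinOn_iff.1 hzmin _
      (hconv.add_smul_sub_mem hzD hy (Ioo_subset_Icc_self hr))
    refine nonneg_of_mul_nonneg_right ((sub_nonneg.2 hmin).trans ?_) hr.1
    rw [← integral_sub (integrable (by fun_prop)) (integrable (by fun_prop)),
      ← integral_const_mul]
    refine integral_mono (integrable (by fun_prop)) (integrable (by fun_prop)) fun u => ?_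
    refine (tangent _ _).trans_eq ?_
    simp only [inner_add_right, inner_smul_right]
    ring
  have h0 : 0 ≤ slope 0 := ge_of_tendsto (hslope.continuousWithinAt (s := Ioi 0))
    (Filter.mem_of_superset (Ioo_mem_nhdsGT one_pos) slope_nonneg)
  simpa only [slope, zero_smul, add_zero] using h0

end CompactlySupportedMeasure

section TruncatedPower

/-- The power `s ↦ s ^ (-κ)`, frozen below the level `ε` so as to be continuous and antitone on
the whole line. -/
def truncPow (κ ε s : ℝ) : ℝ := max s ε ^ (-κ)

variable {κ ε s ε' s' : ℝ}

lemma truncPow_of_le (h : ε ≤ s) : truncPow κ ε s = s ^ (-κ) := by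
  rw [truncPow, max_eq_left h]

lemma continuous_truncPow (hε : 0 < ε) : Continuous (truncPow κ ε) :=
  Continuous.rpow_const (by fun_prop) fun _ => Or.inl (hε.trans_le (le_max_right _ _)).ne'

lemma truncPow_le_truncPow (hκ : 0 < κ) (hε : 0 < ε) (h : max s ε ≤ max s' ε') :
    truncPow κ ε' s' ≤ truncPow κ ε s :=
  rpow_le_rpow_of_nonpos (hε.trans_le (le_max_right _ _)) h (neg_nonpos.2 hκ.le)

lemma antitone_truncPow (hκ : 0 < κ) (hε : 0 < ε) : Antitone (truncPow κ ε) :=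
  fun _ _ h => truncPow_le_truncPow hκ hε (max_le_max_right _ h)

lemma truncPow_lt_truncPow (hκ : 0 < κ) (hε : 0 < ε) (hs : s ≤ ε) (hs' : ε < s') :
    truncPow κ ε s' < truncPow κ ε s := by
  rw [truncPow, truncPow, max_eq_right hs, max_eq_left hs'.le]
  exact rpow_lt_rpow_of_neg hε hs' (neg_neg_iff_pos.2 hκ)

end TruncatedPower

section Horizontal

/-- The hyperplane `{x_{n+1} = 0}`. -/
def horiz (n : ℕ) : Submodule ℝ (V n) := (ℝ ∙ Etop n)ᗮ

variable {n : ℕ}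

lemma inner_Etop (p : V n) : ⟪p, Etop n⟫ = p (Fin.last n) := by
  rw [Etop, EuclideanSpace.inner_single_right, one_mul, conj_trivial]

lemma norm_Etop (n : ℕ) : ‖Etop n‖ = 1 := by simp [Etop]

lemma Etop_last (n : ℕ) : Etop n (Fin.last n) = 1 := by
  rw [← inner_Etop, real_inner_self_eq_norm_sq, norm_Etop, one_pow]

lemma mem_horiz {p : V n} : p ∈ horiz n ↔ p (Fin.last n) = 0 := by
  rw [horiz, Submodule.mem_orthogonal_singleton_iff_inner_left, inner_Etop]

lemma starProjection_horiz (u : V n) :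
    (horiz n).starProjection u = u - u (Fin.last n) • Etop n := by
  rw [horiz, Submodule.starProjection_orthogonal_val,
    Submodule.starProjection_unit_singleton ℝ (norm_Etop n), real_inner_comm, inner_Etop]

lemma inner_starProjection_horiz {p : V n} (hp : p ∈ horiz n) (u : V n) :
    ⟪p, (horiz n).starProjection u⟫ = ⟪p, u⟫ := by
  rw [← Submodule.inner_starProjection_left_eq_right, Submodule.starProjection_eq_self_iff.2 hp]

lemma norm_add_smul_Etop_sq {x : V n} (hx : x ∈ horiz n) (b : ℝ) :
    ‖x + b • Etop n‖ ^ 2 = ‖x‖ ^ 2 + b ^ 2 := by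
  rw [norm_add_sq_real, inner_smul_right, inner_Etop, mem_horiz.1 hx, norm_smul, norm_Etop,
    mul_one, Real.norm_eq_abs, sq_abs]
  ring

lemma norm_sq_eq_norm_starProjection_horiz_sq_add (u : V n) :
    ‖u‖ ^ 2 = ‖(horiz n).starProjection u‖ ^ 2 + u (Fin.last n) ^ 2 := by
  rw [← norm_add_smul_Etop_sq (Submodule.starProjection_apply_mem _ u), starProjection_horiz,
    sub_add_cancel]

lemma finrank_horiz (n : ℕ) : Module.finrank ℝ (horiz n) = n := by
  have : Fact (Module.finrank ℝ (V n) = n + 1) := ⟨by simp⟩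
  exact Submodule.finrank_orthogonal_span_singleton
    (norm_ne_zero_iff.1 (by simp [norm_Etop]))

end Horizontal

section SphericalCap

variable {n : ℕ} {θ : ℝ}

lemma isCompact_sphCap (n : ℕ) (θ : ℝ) : IsCompact (sphCap n θ) := by
  refine (isCompact_sphere (0 : V n) 1).of_isClosed_subset ?_
    fun u hu => mem_sphere_zero_iff_norm.2 hu.1
  exact (isClosed_eq continuous_norm continuous_const).inter
    (isClosed_le continuous_const (EuclideanSpace.proj (𝕜 := ℝ) (Fin.last n)).continuous)

lemma mirror_last {e : V n} (he : e ∈ horiz n) (u : V n) :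
    mirror e u (Fin.last n) = u (Fin.last n) := by
  simp [mirror_apply, mem_horiz.1 he]

lemma mirror_mem_sphCap_iff {e : V n} (he : e ∈ horiz n) {u : V n} :
    mirror e u ∈ sphCap n θ ↔ u ∈ sphCap n θ := by
  simp only [sphCap, mem_ofPred_eq, mirror_last he, LinearIsometryEquiv.norm_map]

/-- The boundary point of the spherical cap in the horizontal direction `e ≠ 0`, which need not
be normalised. -/
def rimPt (n : ℕ) (θ : ℝ) (e : V n) : V n := (sin θ * ‖e‖⁻¹) • e + cos θ • Etop n

lemma inner_rimPt (p e : V n) :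
    ⟪p, rimPt n θ e⟫ = sin θ * ‖e‖⁻¹ * ⟪p, e⟫ + cos θ * p (Fin.last n) := by
  rw [rimPt, inner_add_right, inner_smul_right, inner_smul_right, inner_Etop]

lemma inner_rimPt_of_mem_horiz {p : V n} (hp : p ∈ horiz n) (e : V n) :
    ⟪p, rimPt n θ e⟫ = sin θ * ‖e‖⁻¹ * ⟪p, e⟫ := by
  rw [inner_rimPt, mem_horiz.1 hp, mul_zero, add_zero]

lemma inner_nonpos_of_inner_rimPt_nonpos (hs : 0 < sin θ) (hc : 0 < cos θ) {p e : V n}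
    (hp : 0 ≤ p (Fin.last n)) (he : e ≠ 0) (h : ⟪p, rimPt n θ e⟫ ≤ 0) : ⟪p, e⟫ ≤ 0 := by
  rw [inner_rimPt] at h
  by_contra! hpe
  have := norm_pos_iff.2 he
  have : 0 < sin θ * ‖e‖⁻¹ * ⟪p, e⟫ + cos θ * p (Fin.last n) := by positivity
  linarith

lemma rimPt_last {e : V n} (he : e ∈ horiz n) : rimPt n θ e (Fin.last n) = cos θ := by
  simp [rimPt, mem_horiz.1 he, Etop_last]

lemma rimPt_mem_sphCapBdry {e : V n} (he : e ∈ horiz n) (hne : e ≠ 0) :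
    rimPt n θ e ∈ sphCapBdry n θ := by
  refine ⟨?_, rimPt_last he⟩
  have hne : ‖e‖ ≠ 0 := norm_ne_zero_iff.2 hne
  rw [← pow_eq_one_iff_of_nonneg (norm_nonneg _) two_ne_zero, rimPt,
    norm_add_smul_Etop_sq ((horiz n).smul_mem _ he), norm_smul, mul_pow, norm_mul, norm_inv,
    norm_norm, mul_pow, Real.norm_eq_abs, sq_abs, mul_assoc, ← mul_pow, inv_mul_cancel₀ hne,
    one_pow, mul_one, sin_sq_add_cos_sq]

lemma sphCapBdry_subset_sphCap : sphCapBdry n θ ⊆ sphCap n θ := fun _ hu => ⟨hu.1, hu.2.ge⟩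

lemma rimPt_mem_sphCap {e : V n} (he : e ∈ horiz n) (hne : e ≠ 0) :
    rimPt n θ e ∈ sphCap n θ :=
  sphCapBdry_subset_sphCap (rimPt_mem_sphCapBdry he hne)

lemma norm_le_div_sin_of_inner_le (hs : 0 < sin θ) {M : ℝ} (hM : 0 ≤ M) {z : V n}
    (hz : z ∈ horiz n) (h : ∀ u ∈ sphCap n θ, ⟪u, z⟫ ≤ M) : ‖z‖ ≤ M / sin θ := by
  rcases eq_or_ne z 0 with rfl | hne
  · rw [norm_zero]; positivity
  have hrim := h _ (rimPt_mem_sphCap hz hne)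
  rw [real_inner_comm, inner_rimPt_of_mem_horiz hz, real_inner_self_eq_norm_sq] at hrim
  rw [le_div_iff₀ hs]
  have := norm_pos_iff.2 hne
  calc ‖z‖ * sin θ = sin θ * ‖z‖⁻¹ * ‖z‖ ^ 2 := by field_simp
    _ ≤ M := hrim

end SphericalCap

section CapMeasure

variable {n : ℕ} {θ : ℝ}

/-- The unit upper hemisphere as a graph over the unit ball of the horizontal hyperplane. -/
def hemisphereGraph (n : ℕ) (x : horiz n) : V n := (x : V n) + √(1 - ‖x‖ ^ 2) • Etop n

lemma continuous_hemisphereGraph (n : ℕ) : Continuous (hemisphereGraph n) := by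
  unfold hemisphereGraph
  fun_prop

lemma hemisphereGraph_mem_sphCap {x : horiz n} (hx : ‖x‖ ≤ sin θ) :
    hemisphereGraph n x ∈ sphCap n θ := by
  have hx2 : ‖x‖ ^ 2 ≤ sin θ ^ 2 := by gcongr
  have hcs := sin_sq_add_cos_sq θ
  constructor
  · rw [← pow_eq_one_iff_of_nonneg (norm_nonneg _) two_ne_zero, hemisphereGraph,
      norm_add_smul_Etop_sq x.2, sq_sqrt (by nlinarith [sq_nonneg (cos θ)]),
      Submodule.norm_coe, add_sub_cancel]
  · have hlast : hemisphereGraph n x (Fin.last n) = √(1 - ‖x‖ ^ 2) := by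
      simp [hemisphereGraph, mem_horiz.1 x.2, Etop_last]
    rw [hlast]
    exact le_sqrt_of_sq_le (by linarith)

lemma hemisphereGraph_orthogonalProjectionOnto (hc : 0 ≤ cos θ) {u : V n}
    (hu : u ∈ sphCap n θ) :
    hemisphereGraph n ((horiz n).orthogonalProjectionOnto u) = u := by
  have h := norm_sq_eq_norm_starProjection_horiz_sq_add u
  rw [hu.1, one_pow] at h
  rw [hemisphereGraph, ← Submodule.norm_coe, ← Submodule.starProjection_apply, h,
    add_sub_cancel_left, sqrt_sq (hc.trans hu.2), starProjection_horiz, sub_add_cancel]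

lemma orthogonalProjectionOnto_hemisphereGraph (x : horiz n) :
    (horiz n).orthogonalProjectionOnto (hemisphereGraph n x) = x := by
  rw [← Subtype.coe_inj, ← Submodule.starProjection_apply, starProjection_horiz]
  simp [hemisphereGraph, mem_horiz.1 x.2, Etop_last]

lemma norm_orthogonalProjectionOnto_le_sin (hs : 0 ≤ sin θ) (hc : 0 ≤ cos θ) {u : V n}
    (hu : u ∈ sphCap n θ) : ‖(horiz n).orthogonalProjectionOnto u‖ ≤ sin θ := by
  have h := norm_sq_eq_norm_starProjection_horiz_sq_add u
  have h2 : cos θ ^ 2 ≤ u (Fin.last n) ^ 2 := by gcongr; exact hu.2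
  rw [hu.1, Submodule.starProjection_apply, Submodule.norm_coe] at h
  exact le_of_sq_le_sq (by nlinarith [sin_sq_add_cos_sq θ]) hs

lemma hausdorffMeasure_sphCap_lt_top (hs : 0 ≤ sin θ) (hc : 0 < cos θ) :
    μH[(n : ℝ)] (sphCap n θ) < ⊤ := by
  have hsub : sphCap n θ ⊆ hemisphereGraph n '' Metric.closedBall 0 (sin θ) := fun u hu =>
    ⟨_, mem_closedBall_zero_iff.2 (norm_orthogonalProjectionOnto_le_sin hs hc.le hu),
      hemisphereGraph_orthogonalProjectionOnto hc.le hu⟩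
  have hsmooth : ContDiffOn ℝ 1 (hemisphereGraph n) (Metric.closedBall 0 (sin θ)) := by
    intro x hx
    have hx2 : ‖x‖ ^ 2 ≤ sin θ ^ 2 := by
      gcongr
      exact mem_closedBall_zero_iff.1 hx
    have hne : 1 - ‖x‖ ^ 2 ≠ 0 := by nlinarith [sin_sq_add_cos_sq θ]
    have hsqrt : ContDiffAt ℝ 1 (fun x : horiz n => √(1 - ‖x‖ ^ 2)) x :=
      (contDiffAt_const.sub (contDiff_norm_sq ℝ).contDiffAt).sqrt hne
    exact ((horiz n).subtypeL.contDiff.contDiffAt.add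
      (hsqrt.smul contDiffAt_const)).contDiffWithinAt
  obtain ⟨K, hK⟩ := hsmooth.exists_lipschitzOnWith one_ne_zero (convex_closedBall _ _)
    (isCompact_closedBall _ _)
  have hball : μH[(n : ℝ)] (Metric.closedBall (0 : horiz n) (sin θ)) < ⊤ := by
    have := isAddHaarMeasure_hausdorffMeasure (E := horiz n)
    rw [finrank_horiz] at this
    exact (isCompact_closedBall _ _).measure_lt_top
  calc μH[(n : ℝ)] (sphCap n θ)
      ≤ μH[(n : ℝ)] (hemisphereGraph n '' Metric.closedBall 0 (sin θ)) := measure_mono hsub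
    _ ≤ K ^ (n : ℝ) * μH[(n : ℝ)] (Metric.closedBall (0 : horiz n) (sin θ)) :=
        hK.hausdorffMeasure_image_le n.cast_nonneg
    _ < ⊤ := ENNReal.mul_lt_top (ENNReal.rpow_lt_top_of_nonneg n.cast_nonneg
        ENNReal.coe_ne_top) hball

/-- The surface measure of the spherical cap, viewed as a measure on the ambient space. -/
def capMeasure (n : ℕ) (θ : ℝ) : Measure (V n) := μH[(n : ℝ)].restrict (sphCap n θ)

lemma isFiniteMeasure_capMeasure (hs : 0 ≤ sin θ) (hc : 0 < cos θ) :
    IsFiniteMeasure (capMeasure n θ) :=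
  ⟨by rw [capMeasure, Measure.restrict_apply_univ]; exact hausdorffMeasure_sphCap_lt_top hs hc⟩

lemma ae_mem_sphCap (n : ℕ) (θ : ℝ) : ∀ᵐ u ∂capMeasure n θ, u ∈ sphCap n θ :=
  ae_restrict_mem (isCompact_sphCap n θ).measurableSet

lemma sphCap_subset_support_capMeasure (hs : 0 < sin θ) (hc : 0 ≤ cos θ) :
    sphCap n θ ⊆ (capMeasure n θ).support := by
  intro u hu
  refine (Measure.mem_support_iff_forall u).2 fun U hU => ?_
  have hgraph := hemisphereGraph_orthogonalProjectionOnto hc hu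
  set x := (horiz n).orthogonalProjectionOnto u
  let W : Set (horiz n) := interior (hemisphereGraph n ⁻¹' U) ∩ Metric.ball 0 (sin θ)
  have hxW : x ∈ interior (hemisphereGraph n ⁻¹' U) := mem_interior_iff_mem_nhds.2
    ((continuous_hemisphereGraph n).continuousAt.preimage_mem_nhds (hgraph.symm ▸ hU))
  have hxball : x ∈ closure (Metric.ball 0 (sin θ)) := by
    rw [closure_ball _ hs.ne', mem_closedBall_zero_iff]
    exact norm_orthogonalProjectionOnto_le_sin hs.le hc hu
  have hWpos : 0 < μH[(n : ℝ)] W := by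
    have := isAddHaarMeasure_hausdorffMeasure (E := horiz n)
    rw [finrank_horiz] at this
    exact (isOpen_interior.inter Metric.isOpen_ball).measure_pos _
      (mem_closure_iff.1 hxball _ isOpen_interior hxW)
  have hW : W ⊆ (horiz n).orthogonalProjectionOnto '' (U ∩ sphCap n θ) := fun y hy =>
    ⟨hemisphereGraph n y, ⟨interior_subset (s := hemisphereGraph n ⁻¹' U) hy.1,
      hemisphereGraph_mem_sphCap (mem_ball_zero_iff.1 hy.2).le⟩,
      orthogonalProjectionOnto_hemisphereGraph y⟩
  calc 0 < μH[(n : ℝ)] W := hWpos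
    _ ≤ μH[(n : ℝ)] ((horiz n).orthogonalProjectionOnto '' (U ∩ sphCap n θ)) := measure_mono hW
    _ ≤ μH[(n : ℝ)] (U ∩ sphCap n θ) := by
      simpa using (horiz n).lipschitzWith_orthogonalProjectionOnto.hausdorffMeasure_image_le
        n.cast_nonneg (U ∩ sphCap n θ)
    _ ≤ capMeasure n θ U := Measure.le_restrict_apply _ _

lemma measurePreserving_mirror_capMeasure {e : V n} (he : e ∈ horiz n) :
    MeasurePreserving (mirror e) (capMeasure n θ) (capMeasure n θ) := by
  have hpre : mirror e ⁻¹' sphCap n θ = sphCap n θ := by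
    ext u
    exact mirror_mem_sphCap_iff he
  have h := ((mirror e).toIsometryEquiv.measurePreserving_hausdorffMeasure
    (n : ℝ)).restrict_preimage (isCompact_sphCap n θ).measurableSet
  rwa [LinearIsometryEquiv.coe_toIsometryEquiv, hpre] at h

lemma setIntegral_capCap_eq (F : V n → ℝ) :
    ∫ ζ in capCap n θ, F ζ ∂μH[(n : ℝ)] = ∫ u, F (u - cos θ • Etop n) ∂capMeasure n θ := by
  let shift := IsometryEquiv.addRight (cos θ • Etop n)
  have hpre : shift ⁻¹' sphCap n θ = capCap n θ := by
    ext ζ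
    simp [shift, sphCap, capCap, Etop_last, and_comm]
  have h := (shift.measurePreserving_hausdorffMeasure (n : ℝ)).setIntegral_preimage_emb
    shift.toHomeomorph.measurableEmbedding (fun u => F (u - cos θ • Etop n)) (sphCap n θ)
  rw [hpre] at h
  simpa only [capMeasure, shift, IsometryEquiv.addRight_apply, add_sub_cancel_right] using h

end CapMeasure

section CapillarySupport

variable {n : ℕ} {θ : ℝ} {h f : V n → ℝ}

/-- `p` lies on the supporting hyperplane with normal `u` of the convex body in the upper
half-space with support function `h`, and lies in the floor `{x_{n+1} = 0}` when `u` is on the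
rim of the cap. Only normals in the cap are taken into account. -/
structure IsCapillarySupportPoint (θ : ℝ) (h : V n → ℝ) (u p : V n) : Prop where
  inner_eq : ⟪p, u⟫ = h u
  inner_le : ∀ x ∈ sphCap n θ, ⟪p, x⟫ ≤ h x
  last_nonneg : 0 ≤ p (Fin.last n)
  mem_horiz : u ∈ sphCapBdry n θ → p ∈ horiz n

/-- `h` is, on the cap, the support function of a capillary convex body. This is the geometric
content of `τ[h] ≥ 0` together with the capillary boundary condition. -/
def IsCapillarySupport (n : ℕ) (θ : ℝ) (h : V n → ℝ) : Prop :=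
  ∀ u ∈ sphCap n θ, ∃ p, IsCapillarySupportPoint θ h u p

/-- The intersection with the floor `{x_{n+1} = 0}` of the convex body with support function
`h`. -/
def capBase (θ : ℝ) (h : V n → ℝ) : Set (V n) :=
  {z | z ∈ horiz n ∧ ∀ u ∈ sphCap n θ, ⟪u, z⟫ ≤ h u}

lemma IsCapillarySupport.add (hf : IsCapillarySupport n θ f) (hh : IsCapillarySupport n θ h) :
    IsCapillarySupport n θ (fun u => f u + h u) := by
  intro u hu
  obtain ⟨p, hp⟩ := hf u hu
  obtain ⟨q, hq⟩ := hh u hu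
  refine ⟨p + q, ?_, fun x hx => ?_, add_nonneg hp.last_nonneg hq.last_nonneg,
    fun hb => (horiz n).add_mem (hp.mem_horiz hb) (hq.mem_horiz hb)⟩
  · rw [inner_add_left, hp.inner_eq, hq.inner_eq]
  · rw [inner_add_left]
    exact add_le_add (hp.inner_le x hx) (hq.inner_le x hx)

lemma IsCapillarySupport.const_mul {c : ℝ} (hc : 0 ≤ c) (hh : IsCapillarySupport n θ h) :
    IsCapillarySupport n θ (fun u => c * h u) := by
  intro u hu
  obtain ⟨p, hp⟩ := hh u hu
  refine ⟨c • p, ?_, fun x hx => ?_, mul_nonneg hc hp.last_nonneg,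
    fun hb => (horiz n).smul_mem c (hp.mem_horiz hb)⟩
  · rw [real_inner_smul_left, hp.inner_eq]
  · rw [real_inner_smul_left]
    exact mul_le_mul_of_nonneg_left (hp.inner_le x hx) hc

lemma IsCapillarySupport.sub_inner (hh : IsCapillarySupport n θ h) {z : V n}
    (hz : z ∈ horiz n) : IsCapillarySupport n θ (fun u => h u - ⟪u, z⟫) := by
  intro u hu
  obtain ⟨p, hp⟩ := hh u hu
  refine ⟨p - z, ?_, fun x hx => ?_, ?_, fun hb => (horiz n).sub_mem (hp.mem_horiz hb) hz⟩
  · rw [inner_sub_left, hp.inner_eq, real_inner_comm]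
  · rw [inner_sub_left, real_inner_comm x z]
    exact sub_le_sub_right (hp.inner_le x hx) _
  · rw [PiLp.sub_apply, mem_horiz.1 hz, sub_zero]
    exact hp.last_nonneg

lemma IsCapillarySupport.exists_mem_capBase (hh : IsCapillarySupport n θ h) {e : V n}
    (he : e ∈ horiz n) (hne : e ≠ 0) :
    ∃ p ∈ capBase θ h, h (rimPt n θ e) = sin θ * ‖e‖⁻¹ * ⟪p, e⟫ := by
  obtain ⟨p, hp⟩ := hh _ (rimPt_mem_sphCap he hne)
  have hp0 := hp.mem_horiz (rimPt_mem_sphCapBdry he hne)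
  refine ⟨p, ⟨hp0, fun u hu => (real_inner_comm p u).trans_le (hp.inner_le u hu)⟩, ?_⟩
  rw [← hp.inner_eq, inner_rimPt_of_mem_horiz hp0]

-- The support point `p` at `u` satisfies `⟪p, e⟫ ≤ 0`, hence `⟪p, u⟫ ≤ ⟪p, mirror e u⟫`.
lemma IsCapillarySupport.le_mirror (hf : IsCapillarySupport n θ f) (hs : 0 < sin θ)
    (hc : 0 < cos θ) {e : V n} (he : e ∈ horiz n) (hne : e ≠ 0) (hfe : f (rimPt n θ e) ≤ 0)
    {u : V n} (hu : u ∈ sphCap n θ) (hue : 0 ≤ ⟪u, e⟫) : f u ≤ f (mirror e u) := by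
  obtain ⟨p, hp⟩ := hf u hu
  have hpe : ⟪p, e⟫ ≤ 0 := inner_nonpos_of_inner_rimPt_nonpos hs hc hp.last_nonneg hne
    ((hp.inner_le _ (rimPt_mem_sphCap he hne)).trans hfe)
  have hcoef : 0 ≤ 2 * ⟪u, e⟫ / ‖e‖ ^ 2 := by positivity
  calc f u = ⟪p, u⟫ := hp.inner_eq.symm
    _ ≤ ⟪p, u⟫ - 2 * ⟪u, e⟫ / ‖e‖ ^ 2 * ⟪p, e⟫ :=
        le_sub_self_iff _ |>.2 (mul_nonpos_of_nonneg_of_nonpos hcoef hpe)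
    _ = ⟪p, mirror e u⟫ := by rw [mirror_apply, inner_sub_right, inner_smul_right]
    _ ≤ f (mirror e u) := hp.inner_le _ ((mirror_mem_sphCap_iff he).2 hu)

-- `e` is the point nearest to the origin in the convex hull of the horizontal parts of the zeros
-- of `h - ⟪·, z⟫`; positivity of `h = ⟪·, z⟫` at these zeros keeps the hull away from `0`.
lemma IsCapillarySupport.exists_direction_of_eq_zero (hh : IsCapillarySupport n θ h)
    (hs : 0 ≤ sin θ) (hcont : Continuous h) (hpos : ∀ u ∈ sphCap n θ, 0 < h u) {z : V n}
    (hz : z ∈ capBase θ h) {u₀ : V n} (hu₀ : u₀ ∈ sphCap n θ) (h₀ : h u₀ - ⟪u₀, z⟫ = 0) :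
    ∃ e ∈ horiz n, e ≠ 0 ∧ h (rimPt n θ e) - ⟪rimPt n θ e, z⟫ ≤ 0 ∧
      ∀ u ∈ sphCap n θ, ⟪u, e⟫ ≤ 0 → 0 < h u - ⟪u, z⟫ := by
  obtain ⟨c, hc, hch⟩ := (isCompact_sphCap n θ).exists_forall_le' hcont.continuousOn hpos
  let Z : Set (V n) := (horiz n).starProjection '' {u ∈ sphCap n θ | h u - ⟪u, z⟫ = 0}
  have hull_subset {p : V n} {b : ℝ} (hp : p ∈ horiz n)
      (hb : ∀ u ∈ sphCap n θ, h u - ⟪u, z⟫ = 0 → b ≤ ⟪p, u⟫) {x : V n}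
      (hx : x ∈ closedConvexHull ℝ Z) : b ≤ ⟪p, x⟫ := by
    refine closedConvexHull_min (t := {x | b ≤ ⟪p, x⟫}) ?_
      (convex_halfSpace_ge (innerSL ℝ p).toLinearMap.isLinear b)
      (isClosed_le continuous_const (by fun_prop)) hx
    rintro _ ⟨u, hu, rfl⟩
    exact (hb u hu.1 hu.2).trans_eq (inner_starProjection_horiz hp u).symm
  obtain ⟨e, heZ, hemin⟩ := exists_forall_norm_sq_le_inner
    (K := closedConvexHull ℝ Z) ⟨_, subset_closedConvexHull ⟨u₀, ⟨hu₀, h₀⟩, rfl⟩⟩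
    isClosed_closedConvexHull.isComplete convex_closedConvexHull
  have he : e ∈ horiz n := closedConvexHull_min (t := horiz n)
    (image_subset_iff.2 fun u _ => Submodule.starProjection_apply_mem _ u)
    (horiz n).convex (horiz n).closed_of_finiteDimensional heZ
  have hze : c ≤ ⟪z, e⟫ := hull_subset hz.1
    (fun u hu hu0 => by rw [real_inner_comm]; linarith [hch u hu]) heZ
  have hne : e ≠ 0 := by
    rintro rfl
    rw [inner_zero_right] at hze
    exact hc.not_ge hze
  refine ⟨e, he, hne, ?_, fun u hu hue => ?_⟩
  · obtain ⟨p, hp, hprim⟩ := (hh.sub_inner hz.1).exists_mem_capBase he hne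
    have hpe : 0 ≤ ⟪-p, e⟫ := hull_subset ((horiz n).neg_mem hp.1) (fun u hu hu0 => by
      rw [inner_neg_left, real_inner_comm, neg_nonneg, ← hu0]
      exact hp.2 u hu) heZ
    rw [inner_neg_left, neg_nonneg] at hpe
    exact hprim.trans_le (mul_nonpos_of_nonneg_of_nonpos (by positivity) hpe)
  · refine lt_of_le_of_ne (sub_nonneg.2 (hz.2 u hu)) fun hu0 => ?_
    have h1 := hemin _ (subset_closedConvexHull ⟨u, ⟨hu, hu0.symm⟩, rfl⟩)
    rw [inner_starProjection_horiz he, real_inner_comm] at h1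
    have := norm_pos_iff.2 hne
    have : 0 < ‖e‖ ^ 2 := by positivity
    linarith

end CapillarySupport

section Balanced

variable {n : ℕ} {θ : ℝ}

/-- The weight `q` on the cap has vanishing horizontal first moments. -/
def IsBalanced (n : ℕ) (θ : ℝ) (q : V n → ℝ) : Prop :=
  ∀ a ∈ horiz n, ∫ u, q u * ⟪u, a⟫ ∂capMeasure n θ = 0

lemma integrable_capMeasure_of_continuous {F : Type*} [NormedAddCommGroup F] (hs : 0 ≤ sin θ)
    (hc : 0 < cos θ) {q : V n → F} (hq : Continuous q) : Integrable q (capMeasure n θ) :=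
  have := isFiniteMeasure_capMeasure (n := n) hs hc
  integrable_of_continuousOn_of_ae_mem (isCompact_sphCap n θ) (ae_mem_sphCap n θ)
    hq.continuousOn

lemma isClosed_setOf_mem_capBase {X : Type*} [TopologicalSpace X] {h : X → V n → ℝ}
    (hh : Continuous h.uncurry) : IsClosed {p : X × V n | p.2 ∈ capBase θ (h p.1)} := by
  have heq : {p : X × V n | p.2 ∈ capBase θ (h p.1)} = Prod.snd ⁻¹' (horiz n) ∩
      ⋂ u ∈ sphCap n θ, {p | ⟪u, p.2⟫ ≤ h p.1 u} := by
    ext p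
    simp [capBase]
  rw [heq]
  refine ((horiz n).closed_of_finiteDimensional.preimage continuous_snd).inter
    (isClosed_biInter fun u _ => isClosed_le (by fun_prop) ?_)
  exact hh.comp (continuous_fst.prodMk continuous_const)

lemma isCompact_setOf_mem_capBase (hs : 0 < sin θ) {X : Type*} [TopologicalSpace X] {K : Set X}
    (hK : IsCompact K) {h : X → V n → ℝ} (hh : Continuous h.uncurry) :
    IsCompact {p : X × V n | p.1 ∈ K ∧ p.2 ∈ capBase θ (h p.1)} := by
  obtain ⟨M, hM⟩ := (hK.prod (isCompact_sphCap n θ)).bddAbove_image hh.continuousOn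
  have hbound {x : X} {z : V n} (hx : x ∈ K) (hz : z ∈ capBase θ (h x)) :
      z ∈ Metric.closedBall 0 (max M 0 / sin θ) :=
    mem_closedBall_zero_iff.2 (norm_le_div_sin_of_inner_le hs (le_max_right _ _) hz.1
      fun u hu => (hz.2 u hu).trans (le_max_of_le_left (hM ⟨(x, u), ⟨hx, hu⟩, rfl⟩)))
  have heq : {p : X × V n | p.1 ∈ K ∧ p.2 ∈ capBase θ (h p.1)} =
      K ×ˢ Metric.closedBall 0 (max M 0 / sin θ) ∩ {p | p.2 ∈ capBase θ (h p.1)} := by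
    ext p
    exact ⟨fun hp => ⟨⟨hp.1, hbound hp.1 hp.2⟩, hp.2⟩, fun hp => ⟨hp.1.1, hp.2⟩⟩
  rw [heq]
  exact (hK.prod (isCompact_closedBall _ _)).inter_right (isClosed_setOf_mem_capBase hh)

lemma isCompact_capBase (hs : 0 < sin θ) {h : V n → ℝ} (hh : Continuous h) :
    IsCompact (capBase θ h) := by
  have hcompact := (isCompact_setOf_mem_capBase (θ := θ) hs isCompact_univ
    (h := fun _ : Unit => h) (hh.comp continuous_snd)).image continuous_snd
  convert hcompact
  ext z
  simp

lemma convex_capBase (θ : ℝ) (h : V n → ℝ) : Convex ℝ (capBase θ h) := by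
  have heq : capBase θ h = (horiz n : Set (V n)) ∩ ⋂ u ∈ sphCap n θ, {z | ⟪u, z⟫ ≤ h u} := by
    ext z
    simp [capBase]
  rw [heq]
  exact (horiz n).convex.inter (convex_iInter₂ fun u _ =>
    convex_halfSpace_le (innerSL ℝ u).toLinearMap.isLinear _)

lemma integral_mul_inner_eq_inner_integral_smul {q : V n → ℝ}
    (hq : Integrable (fun u => q u • u) (capMeasure n θ)) (a : V n) :
    ∫ u, q u * ⟪u, a⟫ ∂capMeasure n θ = ⟪∫ u, q u • u ∂capMeasure n θ, a⟫ := by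
  rw [real_inner_comm, ← integral_inner hq]
  simp only [inner_smul_right, real_inner_comm]

-- If the horizontal moment `v` were nonzero, then testing the first-order condition at the point
-- of the base supported in direction `-v` shows that the body lies on one side of `vᗮ`, and then
-- reflection in `vᗮ` forces the moment in direction `-v` to be nonnegative.
lemma IsCapillarySupport.exists_isBalanced {h : V n → ℝ} (hh : IsCapillarySupport n θ h)
    (hs : 0 < sin θ) (hc : 0 < cos θ) (hcont : Continuous h) (hnn : ∀ u ∈ sphCap n θ, 0 ≤ h u)
    {w : ℝ → ℝ} (hw : Continuous w) (hanti : Antitone w) :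
    ∃ z ∈ capBase θ h, IsBalanced n θ (fun u => w (h u - ⟪u, z⟫)) := by
  have := isFiniteMeasure_capMeasure (n := n) hs.le hc
  have hD0 : (0 : V n) ∈ capBase θ h :=
    ⟨(horiz n).zero_mem, fun u hu => (inner_zero_right u).trans_le (hnn u hu)⟩
  obtain ⟨z, hz, hvar⟩ := exists_forall_integral_mul_inner_sub_nonneg (isCompact_sphCap n θ)
    (ae_mem_sphCap n θ) (isCompact_capBase hs hcont) (convex_capBase θ h) ⟨0, hD0⟩ hcont hw hanti
  refine ⟨z, hz, ?_⟩
  set q : V n → ℝ := fun u => w (h u - ⟪u, z⟫)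
  set v := (horiz n).starProjection (∫ u, q u • u ∂capMeasure n θ) with hv
  have hvH : v ∈ horiz n := Submodule.starProjection_apply_mem _ _
  have hmoment {a : V n} (ha : a ∈ horiz n) : ∫ u, q u * ⟪u, a⟫ ∂capMeasure n θ = ⟪v, a⟫ := by
    rw [integral_mul_inner_eq_inner_integral_smul
      (integrable_capMeasure_of_continuous hs.le hc (by fun_prop)), hv,
      Submodule.inner_starProjection_left_eq_right, Submodule.starProjection_eq_self_iff.2 ha]
  suffices hv0 : v = 0 from fun a ha => by rw [hmoment ha, hv0, inner_zero_left]
  by_contra hv0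
  obtain ⟨p, hp, hrim⟩ := hh.exists_mem_capBase ((horiz n).neg_mem hvH) (neg_ne_zero.2 hv0)
  have hpz : ⟪p - z, -v⟫ ≤ 0 := by
    rw [inner_neg_right, neg_nonpos, real_inner_comm,
      ← hmoment ((horiz n).sub_mem hp.1 hz.1)]
    exact hvar p hp
  have hle : h (rimPt n θ (-v)) - ⟪rimPt n θ (-v), z⟫ ≤ 0 := by
    rw [hrim, real_inner_comm z, inner_rimPt_of_mem_horiz hz.1, ← mul_sub, ← inner_sub_left]
    exact mul_nonpos_of_nonneg_of_nonpos (by positivity) hpz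
  have hnonneg := integral_mul_inner_nonneg_of_mirror_le (isCompact_sphCap n θ)
    (ae_mem_sphCap n θ) (measurePreserving_mirror_capMeasure ((horiz n).neg_mem hvH))
    (by fun_prop : Continuous q) ((ae_mem_sphCap n θ).mono fun u hu hue =>
      hanti ((hh.sub_inner hz.1).le_mirror hs hc ((horiz n).neg_mem hvH) (neg_ne_zero.2 hv0)
        hle hu hue))
  rw [hmoment ((horiz n).neg_mem hvH), inner_neg_right, neg_nonneg] at hnonneg
  exact hv0 (real_inner_self_nonpos.1 hnonneg)

end Balanced

section UniformLowerBound

open Filter Topology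

lemma eventually_forall_mem_lt_of_isCompact {Y Z : Type*} [TopologicalSpace Y]
    [TopologicalSpace Z] {S : Set Z} (hS : IsCompact S) {F G : Y → Z → ℝ}
    (hF : Continuous F.uncurry) (hG : Continuous G.uncurry) {y₀ : Y}
    (hlt : ∀ x ∈ S, F y₀ x < G y₀ x) : ∀ᶠ y in 𝓝 y₀, ∀ x ∈ S, F y x < G y x :=
  hS.eventually_forall_of_forall_eventually fun x hx =>
    hF.continuousAt.eventually_lt hG.continuousAt (hlt x hx)

lemma truncPow_mul_le_truncPow_mul {κ ε δ s a : ℝ} (hκ : 0 < κ) (hε : 0 < ε) (hεδ : ε ≤ δ)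
    (h : a ≤ 0 → δ ≤ s) : truncPow κ δ s * a ≤ truncPow κ ε s * a := by
  rcases le_total 0 a with ha | ha
  · exact mul_le_mul_of_nonneg_right
      (truncPow_le_truncPow hκ hε (max_le_max_left s hεδ)) ha
  · rw [truncPow_of_le (h ha), truncPow_of_le (hεδ.trans (h ha))]

variable {n : ℕ} {θ κ : ℝ}

lemma IsCapillarySupport.integral_truncPow_mul_inner_pos {f : V n → ℝ}
    (hf : IsCapillarySupport n θ f) (hκ : 0 < κ) (hs : 0 < sin θ) (hc : 0 < cos θ)
    (hcont : Continuous f) {e : V n} (he : e ∈ horiz n) (hne : e ≠ 0)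
    (hrim : f (rimPt n θ e) ≤ 0) {δ : ℝ} (hδ : 0 < δ)
    (hfar : ∀ u ∈ sphCap n θ, ⟪u, e⟫ ≤ 0 → δ < f u) {u₀ : V n} (hu₀ : u₀ ∈ sphCap n θ)
    (h₀ : f u₀ = 0) : 0 < ∫ u, truncPow κ δ (f u) * ⟪u, e⟫ ∂capMeasure n θ := by
  have := isFiniteMeasure_capMeasure (n := n) hs.le hc
  have hu₀e : 0 < ⟪u₀, e⟫ := lt_of_not_ge fun h => (hfar u₀ hu₀ h).not_ge (h₀.trans_le hδ.le)
  refine integral_mul_inner_pos_of_mirror_le (isCompact_sphCap n θ) (ae_mem_sphCap n θ)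
    (measurePreserving_mirror_capMeasure he) ((continuous_truncPow hδ).comp hcont)
    ((ae_mem_sphCap n θ).mono fun u hu hue =>
      antitone_truncPow hκ hδ (hf.le_mirror hs hc he hne hrim hu hue))
    (sphCap_subset_support_capMeasure hs hc.le hu₀) hu₀e ?_
  refine truncPow_lt_truncPow hκ hδ (h₀.trans_le hδ.le)
    (hfar _ ((mirror_mem_sphCap_iff he).2 hu₀) ?_)
  rw [inner_mirror_self, neg_nonpos]
  exact hu₀e.le

variable {X : Type*} [TopologicalSpace X] {h : X → V n → ℝ} {x : X} {z : V n}

lemma exists_forall_truncPow_moment_pos [FirstCountableTopology X] [LocallyCompactSpace X]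
    (hκ : 0 < κ) (hs : 0 < sin θ) (hc : 0 < cos θ) (hh : Continuous h.uncurry)
    (hx : IsCapillarySupport n θ (h x)) (hpos : ∀ u ∈ sphCap n θ, 0 < h x u)
    (hz : z ∈ capBase θ (h x)) {u₀ : V n} (hu₀ : u₀ ∈ sphCap n θ) (h₀ : h x u₀ - ⟪u₀, z⟫ = 0) :
    ∃ e ∈ horiz n, ∃ δ > 0, ∀ᶠ p in 𝓝 (x, z),
      (∀ u ∈ sphCap n θ ∩ {u | ⟪u, e⟫ ≤ 0}, δ < h p.1 u - ⟪u, p.2⟫) ∧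
      0 < ∫ u, truncPow κ δ (h p.1 u - ⟪u, p.2⟫) * ⟪u, e⟫ ∂capMeasure n θ := by
  have := isFiniteMeasure_capMeasure (n := n) hs.le hc
  obtain ⟨e, he, hne, hrim, hfar⟩ := hx.exists_direction_of_eq_zero hs.le (by fun_prop) hpos hz
    hu₀ h₀
  let f : X × V n → V n → ℝ := fun p u => h p.1 u - ⟪u, p.2⟫
  have hf : Continuous f.uncurry := by
    simp only [f, Function.uncurry_def]
    fun_prop
  have hfar_near : ∀ᶠ δ in 𝓝 (0 : ℝ), ∀ᶠ p in 𝓝 (x, z),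
      ∀ u ∈ sphCap n θ ∩ {u | ⟪u, e⟫ ≤ 0}, δ < f p u := by
    refine Eventually.curry (p := fun q : ℝ × X × V n =>
      ∀ u ∈ sphCap n θ ∩ {u | ⟪u, e⟫ ≤ 0}, q.1 < f q.2 u) ?_
    rw [← nhds_prod_eq]
    exact eventually_forall_mem_lt_of_isCompact (Y := ℝ × X × V n) (F := fun q _ => q.1)
      (G := fun q u => f q.2 u)
      ((isCompact_sphCap n θ).inter_right (isClosed_le (by fun_prop) continuous_const))
      (by fun_prop) (by simp only [Function.uncurry_def]; fun_prop) fun u hu => hfar u hu.1 hu.2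
  obtain ⟨δ, hδfar, hδ⟩ := ((hfar_near.filter_mono nhdsWithin_le_nhds).and
    (self_mem_nhdsWithin (s := Ioi (0 : ℝ)))).exists
  have hmoment : Continuous fun p => ∫ u, truncPow κ δ (f p u) * ⟪u, e⟫ ∂capMeasure n θ := by
    have := continuous_truncPow (κ := κ) hδ
    exact continuous_integral_of_ae_mem
      (F := fun p u => truncPow κ δ (f p u) * ⟪u, e⟫) (isCompact_sphCap n θ) (ae_mem_sphCap n θ)
      (by simp only [Function.uncurry_def]; fun_prop)
  have hmoment_pos : 0 < ∫ u, truncPow κ δ (f (x, z) u) * ⟪u, e⟫ ∂capMeasure n θ :=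
    (hx.sub_inner hz.1).integral_truncPow_mul_inner_pos hκ hs hc (by fun_prop) he hne hrim hδ
      (fun u hu hue => hδfar.self_of_nhds u ⟨hu, hue⟩) hu₀ h₀
  exact ⟨e, he, δ, hδ, hδfar.and (hmoment.continuousAt.eventually_const_lt hmoment_pos)⟩

-- A positive moment at truncation level `δ` stays positive at every lower level.
lemma eventually_not_isBalanced_of_eq_zero [FirstCountableTopology X] [LocallyCompactSpace X]
    (hκ : 0 < κ) (hs : 0 < sin θ) (hc : 0 < cos θ) (hh : Continuous h.uncurry)
    (hx : IsCapillarySupport n θ (h x)) (hpos : ∀ u ∈ sphCap n θ, 0 < h x u)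
    (hz : z ∈ capBase θ (h x)) {u₀ : V n} (hu₀ : u₀ ∈ sphCap n θ) (h₀ : h x u₀ - ⟪u₀, z⟫ = 0) :
    ∀ᶠ q : ℝ × X × V n in 𝓝 (0, x, z), 0 < q.1 →
      ¬ IsBalanced n θ (fun u => truncPow κ q.1 (h q.2.1 u - ⟪u, q.2.2⟫)) := by
  obtain ⟨e, he, δ, hδ, hnear⟩ := exists_forall_truncPow_moment_pos hκ hs hc hh hx hpos hz hu₀ h₀
  rw [nhds_prod_eq]
  filter_upwards [(eventually_lt_nhds hδ).prod_mk hnear] with ⟨ε, p⟩ ⟨hεδ, hfar, hpos⟩ hε hbal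
  refine (hpos.trans_le ?_).ne' (hbal e he)
  have integrable {ε : ℝ} (hε : 0 < ε) : Integrable
      (fun u => truncPow κ ε (h p.1 u - ⟪u, p.2⟫) * ⟪u, e⟫) (capMeasure n θ) := by
    have := continuous_truncPow (κ := κ) hε
    exact integrable_capMeasure_of_continuous hs.le hc (by fun_prop)
  exact integral_mono_ae (integrable hδ) (integrable hε) ((ae_mem_sphCap n θ).mono fun u hu =>
    truncPow_mul_le_truncPow_mul hκ hε hεδ.le fun hue => (hfar u ⟨hu, hue⟩).le)

lemma eventually_forall_mem_le_of_isBalanced [FirstCountableTopology X]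
    [LocallyCompactSpace X] (hκ : 0 < κ) (hs : 0 < sin θ) (hc : 0 < cos θ)
    (hh : Continuous h.uncurry) (hx : IsCapillarySupport n θ (h x))
    (hpos : ∀ u ∈ sphCap n θ, 0 < h x u) (hz : z ∈ capBase θ (h x)) :
    ∀ᶠ q : ℝ × X × V n in 𝓝 (0, x, z), 0 < q.1 →
      IsBalanced n θ (fun u => truncPow κ q.1 (h q.2.1 u - ⟪u, q.2.2⟫)) →
      ∀ u ∈ sphCap n θ, q.1 ≤ h q.2.1 u - ⟪u, q.2.2⟫ := by
  by_cases hzero : ∃ u ∈ sphCap n θ, h x u - ⟪u, z⟫ = 0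
  · obtain ⟨u₀, hu₀, h₀⟩ := hzero
    filter_upwards [eventually_not_isBalanced_of_eq_zero hκ hs hc hh hx hpos hz hu₀ h₀] with
      q hq hq0 hbal
    exact absurd hbal (hq hq0)
  · push Not at hzero
    filter_upwards [eventually_forall_mem_lt_of_isCompact (Y := ℝ × X × V n) (y₀ := (0, x, z))
      (F := fun q _ => q.1) (G := fun q u => h q.2.1 u - ⟪u, q.2.2⟫) (isCompact_sphCap n θ)
      (by fun_prop) (by simp only [Function.uncurry_def]; fun_prop)
      fun u hu => lt_of_le_of_ne (sub_nonneg.2 (hz.2 u hu)) (hzero u hu).symm] with q hq _ _ u hu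
    exact (hq u hu).le

-- The balanced translates at truncation level `ε` range over a compact set, so for small `ε` they
-- all lie above the truncation level.
lemma exists_isBalanced_of_isCompact [FirstCountableTopology X] [LocallyCompactSpace X]
    (hκ : 0 < κ) (hs : 0 < sin θ) (hc : 0 < cos θ) {K : Set X} (hK : IsCompact K)
    (hh : Continuous h.uncurry) (hsupp : ∀ x ∈ K, IsCapillarySupport n θ (h x))
    (hpos : ∀ x ∈ K, ∀ u ∈ sphCap n θ, 0 < h x u) :
    ∃ ε > 0, ∀ x ∈ K, ∃ z ∈ horiz n, (∀ u ∈ sphCap n θ, ε ≤ h x u - ⟪u, z⟫) ∧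
      IsBalanced n θ (fun u => (h x u - ⟪u, z⟫) ^ (-κ)) := by
  have hev : ∀ᶠ ε in 𝓝 (0 : ℝ), ∀ p ∈ {p : X × V n | p.1 ∈ K ∧ p.2 ∈ capBase θ (h p.1)}, 0 < ε →
      IsBalanced n θ (fun u => truncPow κ ε (h p.1 u - ⟪u, p.2⟫)) →
      ∀ u ∈ sphCap n θ, ε ≤ h p.1 u - ⟪u, p.2⟫ :=
    (isCompact_setOf_mem_capBase hs hK hh).eventually_forall_of_forall_eventually fun p hp =>
      eventually_forall_mem_le_of_isBalanced hκ hs hc hh (hsupp p.1 hp.1) (hpos p.1 hp.1) hp.2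
  obtain ⟨ε, hlow, hε⟩ := ((hev.filter_mono nhdsWithin_le_nhds).and
    (self_mem_nhdsWithin (s := Ioi (0 : ℝ)))).exists
  refine ⟨ε, hε, fun x hx => ?_⟩
  obtain ⟨z, hz, hbal⟩ := (hsupp x hx).exists_isBalanced hs hc (by fun_prop)
    (fun u hu => (hpos x hx u hu).le) (continuous_truncPow hε) (antitone_truncPow hκ hε)
  have hle := hlow (x, z) ⟨hx, hz⟩ hε hbal
  refine ⟨z, hz.1, hle, fun a ha => ?_⟩
  rw [← hbal a ha]
  refine integral_congr_ae ((ae_mem_sphCap n θ).mono fun u hu => ?_)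
  simp only [truncPow_of_le (hle u hu)]

end UniformLowerBound

section Path

variable {n : ℕ} {θ κ : ℝ}

lemma IsCapillarySupport.congr {f h : V n → ℝ} (hf : IsCapillarySupport n θ f)
    (heq : EqOn f h (sphCap n θ)) : IsCapillarySupport n θ h := fun u hu =>
  let ⟨p, hp⟩ := hf u hu
  ⟨p, hp.inner_eq.trans (heq hu), fun x hx => (hp.inner_le x hx).trans_eq (heq hx),
    hp.last_nonneg, hp.mem_horiz⟩

lemma IsBalanced.congr {q r : V n → ℝ} (hq : IsBalanced n θ q) (heq : EqOn q r (sphCap n θ)) :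
    IsBalanced n θ r := fun a ha => by
  rw [← hq a ha]
  refine integral_congr_ae ((ae_mem_sphCap n θ).mono fun u hu => ?_)
  simp only [heq hu]

lemma exists_isBalanced_path (hκ : 0 < κ) (hs : 0 < sin θ) (hc : 0 < cos θ) {h : ℝ → V n → ℝ}
    (hh : Continuous h.uncurry) (hsupp : ∀ t ∈ Icc (0 : ℝ) 1, IsCapillarySupport n θ (h t))
    (hpos : ∀ t ∈ Icc (0 : ℝ) 1, ∀ u ∈ sphCap n θ, 0 < h t u)
    (h₀ : IsBalanced n θ (fun u => h 0 u ^ (-κ))) (h₁ : IsBalanced n θ (fun u => h 1 u ^ (-κ))) :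
    ∃ z : ℝ → V n, z 0 = 0 ∧ z 1 = 0 ∧ ∃ m M : ℝ, 0 < m ∧ ∀ t ∈ Icc (0 : ℝ) 1, z t ∈ horiz n ∧
      IsBalanced n θ (fun u => (h t u - ⟪u, z t⟫) ^ (-κ)) ∧
      ∀ u ∈ sphCap n θ, h t u - ⟪u, z t⟫ ∈ Icc m M := by
  obtain ⟨ε, hε, hbal⟩ := exists_isBalanced_of_isCompact hκ hs hc isCompact_Icc hh hsupp hpos
  obtain ⟨c, hc0, hch⟩ := (isCompact_Icc.prod (isCompact_sphCap n θ)).exists_forall_le'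
    hh.continuousOn fun p hp => hpos p.1 hp.1 p.2 hp.2
  obtain ⟨M, hM⟩ := ((isCompact_setOf_mem_capBase hs isCompact_Icc hh).prod
    (isCompact_sphCap n θ)).bddAbove_image
    (f := fun p : (ℝ × V n) × V n => h p.1.1 p.2 - ⟪p.2, p.1.2⟫) (by fun_prop)
  have hchoice : ∀ t ∈ Icc (0 : ℝ) 1, ∃ z ∈ horiz n, (t = 0 ∨ t = 1 → z = 0) ∧
      (∀ u ∈ sphCap n θ, min ε c ≤ h t u - ⟪u, z⟫) ∧
      IsBalanced n θ (fun u => (h t u - ⟪u, z⟫) ^ (-κ)) := by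
    intro t ht
    by_cases hend : t = 0 ∨ t = 1
    · refine ⟨0, (horiz n).zero_mem, fun _ => rfl, fun u hu => ?_, ?_⟩
      · rw [inner_zero_right, sub_zero]
        exact (min_le_right _ _).trans (hch (t, u) ⟨ht, hu⟩)
      · simp only [inner_zero_right, sub_zero]
        rcases hend with rfl | rfl
        exacts [h₀, h₁]
    · obtain ⟨z, hz, hle, hbz⟩ := hbal t ht
      exact ⟨z, hz, fun h => absurd h hend, fun u hu => (min_le_left _ _).trans (hle u hu), hbz⟩
  choose! z hz hend hle hbz using hchoice
  have hm : 0 < min ε c := lt_min hε hc0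
  refine ⟨z, hend 0 (by simp) (Or.inl rfl), hend 1 (by simp) (Or.inr rfl), min ε c, M, hm,
    fun t ht => ⟨hz t ht, hbz t ht, fun u hu => ⟨hle t ht u hu, ?_⟩⟩⟩
  exact hM ⟨((t, z t), u), ⟨⟨ht, hz t ht, fun x hx => sub_nonneg.1 (hm.le.trans (hle t ht x hx))⟩,
    hu⟩, rfl⟩

lemma exists_isBalanced_homotopy (hκ : 0 < κ) (hs : 0 < sin θ) (hc : 0 < cos θ)
    {A B : V n → ℝ} (hAc : ContinuousOn A (sphCap n θ)) (hBc : ContinuousOn B (sphCap n θ))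
    (hA : IsCapillarySupport n θ A) (hB : IsCapillarySupport n θ B)
    (hApos : ∀ u ∈ sphCap n θ, 0 < A u) (hBpos : ∀ u ∈ sphCap n θ, 0 < B u)
    (hAbal : IsBalanced n θ (fun u => A u ^ (-κ)))
    (hBbal : IsBalanced n θ (fun u => B u ^ (-κ))) :
    ∃ z : ℝ → V n, z 0 = 0 ∧ z 1 = 0 ∧ ∃ m M : ℝ, 0 < m ∧ ∀ t ∈ Icc (0 : ℝ) 1, z t ∈ horiz n ∧
      IsBalanced n θ (fun u => ((1 - t) * A u + t * B u - ⟪u, z t⟫) ^ (-κ)) ∧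
      ∀ u ∈ sphCap n θ, (1 - t) * A u + t * B u - ⟪u, z t⟫ ∈ Icc m M := by
  have hclosed := (isCompact_sphCap n θ).isClosed
  obtain ⟨A', hA'⟩ := ContinuousMap.exists_restrict_eq hclosed ⟨_, hAc.domRestrict⟩
  obtain ⟨B', hB'⟩ := ContinuousMap.exists_restrict_eq hclosed ⟨_, hBc.domRestrict⟩
  replace hA' : EqOn A A' (sphCap n θ) := fun u hu => (DFunLike.congr_fun hA' ⟨u, hu⟩).symm
  replace hB' : EqOn B B' (sphCap n θ) := fun u hu => (DFunLike.congr_fun hB' ⟨u, hu⟩).symm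
  obtain ⟨z, hz0, hz1, m, M, hm, hz⟩ := exists_isBalanced_path hκ hs hc
    (h := fun t u => (1 - t) * A' u + t * B' u) (by simp only [Function.uncurry_def]; fun_prop)
    (fun t ht => ((hA.congr hA').const_mul (sub_nonneg.2 ht.2)).add
      ((hB.congr hB').const_mul ht.1))
    (fun t ht u hu => convex_Ioi (0 : ℝ) ((hApos u hu).trans_eq (hA' hu))
      ((hBpos u hu).trans_eq (hB' hu)) (sub_nonneg.2 ht.2) ht.1 (sub_add_cancel 1 t))
    (hAbal.congr fun u hu => by simp [hA' hu]) (hBbal.congr fun u hu => by simp [hB' hu])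
  refine ⟨z, hz0, hz1, m, M, hm, fun t ht => ⟨(hz t ht).1, ?_, fun u hu => ?_⟩⟩
  · exact (hz t ht).2.1.congr fun u hu => by simp only [hA' hu, hB' hu]
  · rw [hA' hu, hB' hu]
    exact (hz t ht).2.2 u hu

lemma exists_forall_rpow_neg_mem_Icc {m M : ℝ} (hκ : 0 ≤ κ) (hm : 0 < m) :
    ∃ C : ℝ, 1 ≤ C ∧ ∀ s ∈ Icc m M, s ^ (-κ) ∈ Icc (1 / C) C := by
  refine ⟨max 1 (max (m ^ (-κ)) (M ^ κ)), le_max_left _ _, fun s hs => ⟨?_, ?_⟩⟩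
  · have hs0 : 0 < s := hm.trans_le hs.1
    rw [one_div, rpow_neg hs0.le]
    exact inv_anti₀ (rpow_pos_of_pos hs0 κ)
      ((rpow_le_rpow hs0.le hs.2 hκ).trans ((le_max_right _ _).trans (le_max_right _ _)))
  · exact (rpow_le_rpow_of_nonpos hm hs.1 (neg_nonpos.2 hκ)).trans
      ((le_max_left _ _).trans (le_max_right _ _))

end Path

section SecondDerivative

variable {E : Type*} [NormedAddCommGroup E] [NormedSpace ℝ E] {f g : E → ℝ} {x y : E}

lemma differentiableAt_fderiv (hf : ContDiffAt ℝ 2 f x) : DifferentiableAt ℝ (fderiv ℝ f) x :=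
  (hf.fderiv_right (m := 1) (by norm_num)).differentiableAt one_ne_zero

lemma fderiv_fderiv_add (hf : ContDiffAt ℝ 2 f x) (hg : ContDiffAt ℝ 2 g x) :
    fderiv ℝ (fderiv ℝ fun z => f z + g z) x =
      fderiv ℝ (fderiv ℝ f) x + fderiv ℝ (fderiv ℝ g) x := by
  have hfderiv : fderiv ℝ (fun z => f z + g z) =ᶠ[nhds x] fderiv ℝ f + fderiv ℝ g := by
    filter_upwards [hf.eventually (by simp), hg.eventually (by simp)] with z hfz hgz
    exact fderiv_add (hfz.differentiableAt two_ne_zero) (hgz.differentiableAt two_ne_zero)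
  rw [hfderiv.fderiv_eq, fderiv_add (differentiableAt_fderiv hf) (differentiableAt_fderiv hg)]

lemma fderiv_fderiv_const_mul (f : E → ℝ) (c : ℝ) (x : E) :
    fderiv ℝ (fderiv ℝ fun z => c * f z) x = c • fderiv ℝ (fderiv ℝ f) x := by
  have hfderiv : fderiv ℝ (fun z => c * f z) = c • fderiv ℝ f :=
    funext fun z => congrFun (fderiv_const_smul_field (f := f) c) z
  rw [hfderiv]
  exact congrFun (fderiv_const_smul_field (f := fderiv ℝ f) c) x

lemma fderiv_fderiv_continuousLinearMap (L : E →L[ℝ] ℝ) (x : E) :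
    fderiv ℝ (fderiv ℝ L) x = 0 := by
  rw [funext fun z => L.fderiv (x := z), fderiv_fun_const, Pi.zero_apply]

lemma fderiv_apply_self_of_homogeneous (hf : DifferentiableAt ℝ f x)
    (hhom : ∀ᶠ l : ℝ in nhds 1, f (l • x) = l * f x) : fderiv ℝ f x x = f x := by
  have hchain : HasDerivAt (fun l : ℝ => f (l • x)) (fderiv ℝ f x x) 1 := by
    have hline := (hasDerivAt_id (1 : ℝ)).smul_const x
    rw [one_smul] at hline
    refine HasFDerivAt.comp_hasDerivAt (1 : ℝ) ?_ hline
    simpa using hf.hasFDerivAt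
  have hlinear : HasDerivAt (fun l : ℝ => l * f x) (f x) 1 := by
    simpa using (hasDerivAt_id (1 : ℝ)).mul_const (f x)
  exact hchain.unique (hlinear.congr_of_eventuallyEq hhom)

lemma smul_fderiv_fderiv_smul_of_homogeneous {r : ℝ} (hr : r ≠ 0)
    (hhom : ∀ᶠ z in nhds x, f (r • z) = r * f z) :
    r • fderiv ℝ (fderiv ℝ f) (r • x) = fderiv ℝ (fderiv ℝ f) x := by
  have hfderiv : (fun z => fderiv ℝ f (r • z)) =ᶠ[nhds x] fderiv ℝ f := by
    filter_upwards [eventually_eventually_nhds.2 hhom] with z hz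
    have h : r • fderiv ℝ f (r • z) = r • fderiv ℝ f z := by
      rw [← fderiv_comp_smul, Filter.EventuallyEq.fderiv_eq hz]
      exact congrFun (fderiv_const_smul_field (f := f) r) z
    exact smul_right_injective _ hr h
  rw [← fderiv_comp_smul, hfderiv.fderiv_eq]

lemma fderiv_apply_sub_le (hf : ∀ z ∈ segment ℝ x y, ContDiffAt ℝ 2 f z)
    (hnn : ∀ z ∈ openSegment ℝ x y, 0 ≤ fderiv ℝ (fderiv ℝ f) z (y - x) (y - x)) :
    fderiv ℝ f x (y - x) ≤ f y - f x := by
  let line : ℝ → E := AffineMap.lineMap x y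
  have hline (s : ℝ) : HasDerivAt line (y - x) s := AffineMap.hasDerivAt_lineMap
  have hcd {s : ℝ} (hs : s ∈ Icc (0 : ℝ) 1) : ContDiffAt ℝ 2 f (line s) :=
    hf _ (segment_eq_image_lineMap ℝ x y ▸ mem_image_of_mem _ hs)
  have hderiv {s : ℝ} (hs : s ∈ Icc (0 : ℝ) 1) :
      HasDerivAt (f ∘ line) (fderiv ℝ f (line s) (y - x)) s :=
    ((hcd hs).differentiableAt two_ne_zero).hasFDerivAt.comp_hasDerivAt s (hline s)
  have hderiv2 {s : ℝ} (hs : s ∈ Icc (0 : ℝ) 1) :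
      HasDerivAt (fun s => fderiv ℝ f (line s) (y - x))
        (fderiv ℝ (fderiv ℝ f) (line s) (y - x) (y - x)) s := by
    have h := ((differentiableAt_fderiv (hcd hs)).hasFDerivAt.comp_hasDerivAt s
      (hline s)).clm_apply (hasDerivAt_const s (y - x))
    rwa [map_zero, add_zero] at h
  have hconv : ConvexOn ℝ (Icc 0 1) (f ∘ line) := by
    refine convexOn_of_hasDerivWithinAt2_nonneg (convex_Icc 0 1)
      (fun s hs => (hderiv hs).continuousAt.continuousWithinAt)
      (fun s hs => (hderiv (interior_subset hs)).hasDerivWithinAt)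
      (fun s hs => (hderiv2 (interior_subset hs)).hasDerivWithinAt) fun s hs => ?_
    rw [interior_Icc] at hs
    exact hnn _ (openSegment_eq_image_lineMap ℝ x y ▸ mem_image_of_mem _ hs)
  simpa [slope_def_field, line] using hconv.le_slope_of_hasDerivAt (left_mem_Icc.2 zero_le_one)
    (right_mem_Icc.2 zero_le_one) one_pos (hderiv (left_mem_Icc.2 zero_le_one))

end SecondDerivative

section NormHessian

variable {E : Type*} [NormedAddCommGroup E] [InnerProductSpace ℝ E] {x u : E}

lemma hasFDerivAt_norm (hx : x ≠ 0) :
    HasFDerivAt (fun y : E => ‖y‖) (‖x‖⁻¹ • innerSL ℝ x) x := by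
  have h := (hasStrictFDerivAt_norm_sq x).hasFDerivAt.sqrt (by positivity)
  simp only [sqrt_sq (norm_nonneg _)] at h
  convert h using 1
  rw [← Nat.cast_smul_eq_nsmul ℝ, smul_smul]
  congr 1
  push_cast
  field_simp

lemma fderiv_fderiv_norm_apply (hu : ‖u‖ = 1) (v w : E) :
    fderiv ℝ (fderiv ℝ fun y : E => ‖y‖) u v w = ⟪v, w⟫ - ⟪u, v⟫ * ⟪u, w⟫ := by
  have hu0 : u ≠ 0 := norm_ne_zero_iff.1 (hu ▸ one_ne_zero)
  have hfderiv : fderiv ℝ (fun y : E => ‖y‖) =ᶠ[nhds u] fun x => ‖x‖⁻¹ • innerSL ℝ x := by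
    filter_upwards [isOpen_ne.mem_nhds hu0] with x hx using (hasFDerivAt_norm hx).fderiv
  have h : HasFDerivAt (fun x : E => ‖x‖⁻¹ • innerSL ℝ x) _ u :=
    ((hasDerivAt_inv (hu ▸ one_ne_zero)).comp_hasFDerivAt u (hasFDerivAt_norm hu0)).smul
      (innerSL ℝ (E := E)).hasFDerivAt
  rw [hfderiv.fderiv_eq, h.fderiv]
  simp only [Function.comp_apply, hu, inv_one, one_pow, one_smul, neg_smul, add_apply,
    ContinuousLinearMap.smulRight_apply, neg_apply, smul_apply, innerSL_apply_apply,
    smul_eq_mul]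
  rw [innerSL_apply_apply, ← sub_eq_add_neg]

end NormHessian

section HomogeneousExtension

variable {n : ℕ} {θ : ℝ} {m : ℕ∞} {g G : V n → ℝ} {x u v : V n}

lemma ne_zero_of_mem_sphCap (hu : u ∈ sphCap n θ) : u ≠ 0 :=
  norm_ne_zero_iff.1 (hu.1 ▸ one_ne_zero)

lemma sphCap_subset_coneCap : sphCap n θ ⊆ coneCap n θ :=
  fun u hu => ⟨1, one_pos, u, hu, (one_smul ℝ u).symm⟩

lemma inv_norm_smul_mem_sphCap (hx : x ∈ coneCap n θ) : ‖x‖⁻¹ • x ∈ sphCap n θ := by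
  obtain ⟨l, hl, u, hu, rfl⟩ := hx
  rwa [norm_smul, hu.1, mul_one, Real.norm_of_nonneg hl.le, inv_smul_smul₀ hl.ne']

lemma mem_coneCap (hx : x ≠ 0) (hle : cos θ * ‖x‖ ≤ x (Fin.last n)) : x ∈ coneCap n θ := by
  have hpos : 0 < ‖x‖ := norm_pos_iff.2 hx
  refine ⟨‖x‖, hpos, ‖x‖⁻¹ • x, ⟨norm_smul_inv_norm hx, ?_⟩, (smul_inv_smul₀ hpos.ne' x).symm⟩
  rwa [PiLp.smul_apply, smul_eq_mul, inv_mul_eq_div, le_div_iff₀ hpos]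

lemma mem_interior_coneCap (hlt : cos θ * ‖x‖ < x (Fin.last n)) : x ∈ interior (coneCap n θ) := by
  refine interior_maximal (fun y hy => mem_coneCap ?_ (mem_ofPred.1 hy).le)
    (isOpen_lt (f := fun y : V n => cos θ * ‖y‖) (g := fun y => y (Fin.last n)) (by fun_prop)
      (by fun_prop)) hlt
  rintro rfl
  simp at hy

lemma cos_le_last_of_mem_segment (hu : u ∈ sphCap n θ) (hv : v ∈ sphCap n θ)
    (hx : x ∈ segment ℝ u v) : cos θ ≤ x (Fin.last n) :=
  (convex_halfSpace_ge (EuclideanSpace.proj (𝕜 := ℝ) (Fin.last n)).isLinear (cos θ)).segment_subset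
    hu.2 hv.2 hx

lemma segment_subset_coneCap (hc : 0 < cos θ) (hu : u ∈ sphCap n θ) (hv : v ∈ sphCap n θ) :
    segment ℝ u v ⊆ coneCap n θ := by
  intro x hx
  have hlast := cos_le_last_of_mem_segment hu hv hx
  have hnorm : ‖x‖ ≤ 1 := mem_closedBall_zero_iff.1 <|
    (convex_closedBall (0 : V n) 1).segment_subset (mem_closedBall_zero_iff.2 hu.1.le)
      (mem_closedBall_zero_iff.2 hv.1.le) hx
  refine mem_coneCap ?_ ((mul_le_of_le_one_right hc.le hnorm).trans hlast)
  rintro rfl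
  exact hc.not_ge hlast

lemma openSegment_subset_interior_coneCap (hc : 0 < cos θ) (hu : u ∈ sphCap n θ)
    (hv : v ∈ sphCap n θ) (hne : u ≠ v) : openSegment ℝ u v ⊆ interior (coneCap n θ) := by
  intro x hx
  have hnorm : ‖x‖ < 1 := by
    have h := (strictConvex_closedBall ℝ (0 : V n) 1).openSegment_subset
      (mem_closedBall_zero_iff.2 hu.1.le) (mem_closedBall_zero_iff.2 hv.1.le) hne hx
    rwa [interior_closedBall _ one_ne_zero, mem_ball_zero_iff] at h
  exact mem_interior_coneCap ((mul_lt_of_lt_one_right hc hnorm).trans_le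
    (cos_le_last_of_mem_segment hu hv (openSegment_subset_segment ℝ u v hx)))

lemma IsHomExt.contDiffAt (hG : IsHomExt n θ m g G) (hx : x ∈ coneCap n θ) :
    ContDiffAt ℝ m G x :=
  let ⟨⟨_, hU, hcone, hsmooth⟩, _⟩ := hG
  hsmooth.contDiffAt (hU.mem_nhds (hcone hx))

lemma IsHomExt.map_smul (hG : IsHomExt n θ m g G) {l : ℝ} (hl : 0 < l) (hx : x ∈ coneCap n θ) :
    G (l • x) = l * G x := by
  obtain ⟨r, hr, u, hu, rfl⟩ := hx
  rw [smul_smul, hG.2.1 _ (mul_pos hl hr) u hu, hG.2.1 r hr u hu, mul_assoc]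

lemma IsHomExt.continuousOn (hG : IsHomExt n θ m g G) : ContinuousOn G (sphCap n θ) :=
  fun _ hu => (hG.contDiffAt (sphCap_subset_coneCap hu)).continuousAt.continuousWithinAt

lemma IsHomExt.differentiableAt (hG : IsHomExt n θ m g G) (hm : m ≠ 0) (hx : x ∈ coneCap n θ) :
    DifferentiableAt ℝ G x :=
  (hG.contDiffAt hx).differentiableAt (by exact_mod_cast hm)

lemma IsHomExt.fderiv_fderiv_nonneg (hG : IsHomExt n θ 2 g G) (hτ : TauNonneg n θ G)
    (hx : x ∈ interior (coneCap n θ)) (v : V n) : 0 ≤ fderiv ℝ (fderiv ℝ G) x v v := by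
  have hxS := inv_norm_smul_mem_sphCap (interior_subset hx)
  have hr : 0 < ‖x‖⁻¹ := inv_pos.2 <| norm_pos_iff.2 fun h =>
    ne_zero_of_mem_sphCap hxS (by rw [h, smul_zero])
  have hhom : ∀ᶠ y in nhds x, G (‖x‖⁻¹ • y) = ‖x‖⁻¹ * G y := by
    filter_upwards [mem_interior_iff_mem_nhds.1 hx] with y hy using hG.map_smul hr hy
  rw [← smul_fderiv_fderiv_smul_of_homogeneous hr.ne' hhom]
  exact mul_nonneg hr.le (hτ _ hxS v)

lemma IsHomExt.fderiv_apply_self (hG : IsHomExt n θ m g G) (hm : m ≠ 0) (hu : u ∈ coneCap n θ) :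
    fderiv ℝ G u u = G u := by
  refine fderiv_apply_self_of_homogeneous (hG.differentiableAt hm hu) ?_
  filter_upwards [lt_mem_nhds (zero_lt_one' ℝ)] with l hl using hG.map_smul hl hu

lemma IsHomExt.fderiv_apply_le (hG : IsHomExt n θ 2 g G) (hτ : TauNonneg n θ G)
    (hc : 0 < cos θ) (hu : u ∈ sphCap n θ) (hv : v ∈ sphCap n θ) : fderiv ℝ G u v ≤ G v := by
  have hself := hG.fderiv_apply_self two_ne_zero (sphCap_subset_coneCap hu)
  rcases eq_or_ne u v with rfl | hne
  · exact hself.le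
  have h := fderiv_apply_sub_le
    (fun z hz => hG.contDiffAt (segment_subset_coneCap hc hu hv hz)) fun z hz =>
      hG.fderiv_fderiv_nonneg hτ (openSegment_subset_interior_coneCap hc hu hv hne hz) (v - u)
  rw [map_sub, hself] at h
  linarith

lemma exists_eq_smul_rimPt_add_smul_Etop (hs : 0 < sin θ) (hc : 0 ≤ cos θ) (hu : ‖u‖ = 1)
    (hlt : cos θ < u (Fin.last n)) (hne : (horiz n).starProjection u ≠ 0) :
    ∃ α β : ℝ, 0 ≤ α ∧ 0 < β ∧
      u = α • rimPt n θ ((horiz n).starProjection u) + β • Etop n := by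
  have hsq := norm_sq_eq_norm_starProjection_horiz_sq_add u
  have hproj := starProjection_horiz u
  set e := (horiz n).starProjection u
  have hle : ‖e‖ ≤ sin θ := le_of_sq_le_sq (by
    rw [hu] at hsq
    nlinarith [sin_sq_add_cos_sq θ]) hs.le
  refine ⟨‖e‖ / sin θ, u (Fin.last n) - ‖e‖ / sin θ * cos θ, by positivity, ?_, ?_⟩
  · exact sub_pos.2 ((mul_le_of_le_one_left hc ((div_le_one hs).2 hle)).trans_lt hlt)
  · have hcoeff : ‖e‖ / sin θ * (sin θ * ‖e‖⁻¹) = 1 := by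
      have := norm_ne_zero_iff.2 hne
      field_simp
    rw [rimPt, smul_add, smul_smul, hcoeff, one_smul, smul_smul, sub_smul, hproj]
    abel

-- On `u = α • r + β • E` with `r` on the rim, `DG(r)` annihilates the vertical part, so comparing
-- `DG(r) u ≤ G u = DG(u) u` with `DG(u) r ≤ G r` leaves `0 ≤ β * DG(u) E`.
lemma IsHomExt.fderiv_apply_Etop_nonneg (hG : IsHomExt n θ 2 g G) (hτ : TauNonneg n θ G)
    (hcap : IsCapillaryF n θ G) (hs : 0 < sin θ) (hc : 0 < cos θ) (hu : u ∈ sphCap n θ)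
    (hGu : 0 ≤ G u) : 0 ≤ fderiv ℝ G u (Etop n) := by
  have euler {w : V n} (hw : w ∈ sphCap n θ) : fderiv ℝ G w w = G w :=
    hG.fderiv_apply_self two_ne_zero (sphCap_subset_coneCap hw)
  rcases hu.2.eq_or_lt with hrim | hlt
  · exact (hcap u ⟨hu.1, hrim.symm⟩).ge
  rcases eq_or_ne ((horiz n).starProjection u) 0 with h0 | hne
  · rw [starProjection_horiz, sub_eq_zero] at h0
    have h : u (Fin.last n) * fderiv ℝ G u (Etop n) = G u := by
      rw [← smul_eq_mul, ← _root_.map_smul, ← h0, euler hu]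
    exact nonneg_of_mul_nonneg_right (h.symm ▸ hGu) (hc.trans hlt)
  obtain ⟨α, β, hα, hβ, hdecomp⟩ := exists_eq_smul_rimPt_add_smul_Etop hs hc.le hu.1 hlt hne
  have hr := rimPt_mem_sphCapBdry (θ := θ) (Submodule.starProjection_apply_mem (horiz n) u) hne
  set r := rimPt n θ ((horiz n).starProjection u)
  have hrS := sphCapBdry_subset_sphCap hr
  have expand (L : V n →L[ℝ] ℝ) : L u = α * L r + β * L (Etop n) := by
    conv_lhs => rw [hdecomp, map_add, _root_.map_smul, _root_.map_smul, smul_eq_mul, smul_eq_mul]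
  refine nonneg_of_mul_nonneg_right (le_of_add_le_add_left (a := α * G r) ?_) hβ
  calc α * G r + 0 = fderiv ℝ G r u := by rw [expand, hcap r hr, euler hrS, mul_zero]
    _ ≤ fderiv ℝ G u u := (hG.fderiv_apply_le hτ hc hrS hu).trans_eq (euler hu).symm
    _ = α * fderiv ℝ G u r + β * fderiv ℝ G u (Etop n) := expand _
    _ ≤ α * G r + β * fderiv ℝ G u (Etop n) := by
      gcongr
      exact hG.fderiv_apply_le hτ hc hu hrS

lemma IsHomExt.isCapillarySupport (hG : IsHomExt n θ 2 g G) (hτ : TauNonneg n θ G)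
    (hcap : IsCapillaryF n θ G) (hs : 0 < sin θ) (hc : 0 < cos θ)
    (hnn : ∀ u ∈ sphCap n θ, 0 ≤ G u) : IsCapillarySupport n θ G := by
  refine fun u hu => ⟨gradient G u, ?_, fun x hx => ?_, ?_, fun hb => ?_⟩
  · rw [inner_gradient_left, hG.fderiv_apply_self two_ne_zero (sphCap_subset_coneCap hu)]
  · rw [inner_gradient_left]
    exact hG.fderiv_apply_le hτ hc hu hx
  · rw [← inner_Etop, inner_gradient_left]
    exact hG.fderiv_apply_Etop_nonneg hτ hcap hs hc hu (hnn u hu)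
  · rw [mem_horiz, ← inner_Etop, inner_gradient_left, hcap u hb]

end HomogeneousExtension

section CapillaryFunction

variable {n : ℕ} {θ κ : ℝ} {m : ℕ∞} {g g₀ g₁ G G₀ G₁ : V n → ℝ} {ζ u z : V n}

lemma sub_mem_capCap (hu : u ∈ sphCap n θ) : u - cos θ • Etop n ∈ capCap n θ :=
  ⟨by simpa [Etop_last] using hu.2, by rw [sub_add_cancel, hu.1]⟩

lemma add_mem_sphCap (hζ : ζ ∈ capCap n θ) : ζ + cos θ • Etop n ∈ sphCap n θ :=
  ⟨hζ.2, by simpa [Etop_last] using hζ.1⟩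

lemma IsHomExt.apply_eq (hG : IsHomExt n θ m g G) (hu : u ∈ sphCap n θ) :
    G u = g (u - cos θ • Etop n) := by
  rw [← hG.2.2 _ (sub_mem_capCap hu), sub_add_cancel]

lemma IsHomExt.of_le {m' : ℕ∞} (hG : IsHomExt n θ m g G) (hm : m' ≤ m) : IsHomExt n θ m' g G :=
  let ⟨⟨U, hU, hcone, hsmooth⟩, hhom, hval⟩ := hG
  ⟨⟨U, hU, hcone, hsmooth.of_le (WithTop.coe_le_coe.2 hm)⟩, hhom, hval⟩

lemma IsHomExt.add (h₀ : IsHomExt n θ m g₀ G₀) (h₁ : IsHomExt n θ m g₁ G₁) :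
    IsHomExt n θ m (fun ζ => g₀ ζ + g₁ ζ) (fun x => G₀ x + G₁ x) := by
  obtain ⟨⟨U₀, hU₀, hcone₀, hsmooth₀⟩, hhom₀, hval₀⟩ := h₀
  obtain ⟨⟨U₁, hU₁, hcone₁, hsmooth₁⟩, hhom₁, hval₁⟩ := h₁
  refine ⟨⟨U₀ ∩ U₁, hU₀.inter hU₁, subset_inter hcone₀ hcone₁,
    (hsmooth₀.mono inter_subset_left).add (hsmooth₁.mono inter_subset_right)⟩,
    fun l hl u hu => ?_, fun ζ hζ => ?_⟩
  · simp only [hhom₀ l hl u hu, hhom₁ l hl u hu, mul_add]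
  · simp only [hval₀ ζ hζ, hval₁ ζ hζ]

lemma IsHomExt.const_mul (hG : IsHomExt n θ m g G) (c : ℝ) :
    IsHomExt n θ m (fun ζ => c * g ζ) (fun x => c * G x) := by
  obtain ⟨⟨U, hU, hcone, hsmooth⟩, hhom, hval⟩ := hG
  refine ⟨⟨U, hU, hcone, contDiffOn_const.mul hsmooth⟩, fun l hl u hu => ?_, fun ζ hζ => ?_⟩
  · simp only [hhom l hl u hu, mul_left_comm]
  · simp only [hval ζ hζ]

lemma inner_add_smul_Etop (hz : z ∈ horiz n) (ζ : V n) (c : ℝ) :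
    ⟪ζ + c • Etop n, z⟫ = ⟪ζ, z⟫ := by
  rw [inner_add_left, real_inner_smul_left, real_inner_comm z (Etop n), inner_Etop,
    mem_horiz.1 hz, mul_zero, add_zero]

lemma isHomExt_inner (hz : z ∈ horiz n) :
    IsHomExt n θ m (fun ζ => ⟪ζ, z⟫) (fun x => ⟪x, z⟫) :=
  ⟨⟨univ, isOpen_univ, subset_univ _, (contDiff_id.inner ℝ contDiff_const).contDiffOn⟩,
    fun l _ u _ => real_inner_smul_left u z l, fun ζ _ => inner_add_smul_Etop hz ζ _⟩

/-- `g` is a capillary function with `τ[g] ≥ 0`, and `G` is its homogeneous extension. -/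
structure IsConvexCapillary (n : ℕ) (θ : ℝ) (g G : V n → ℝ) : Prop where
  isHomExt : IsHomExt n θ 2 g G
  tauNonneg : TauNonneg n θ G
  isCapillaryF : IsCapillaryF n θ G

lemma IsConvexCapillary.add (h₀ : IsConvexCapillary n θ g₀ G₀)
    (h₁ : IsConvexCapillary n θ g₁ G₁) :
    IsConvexCapillary n θ (fun ζ => g₀ ζ + g₁ ζ) (fun x => G₀ x + G₁ x) where
  isHomExt := h₀.isHomExt.add h₁.isHomExt
  tauNonneg u hu v := by
    have hcone := sphCap_subset_coneCap hu
    rw [hessQ, fderiv_fderiv_add (h₀.isHomExt.contDiffAt hcone) (h₁.isHomExt.contDiffAt hcone)]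
    exact add_nonneg (h₀.tauNonneg u hu v) (h₁.tauNonneg u hu v)
  isCapillaryF u hu := by
    have hcone := sphCap_subset_coneCap (sphCapBdry_subset_sphCap hu)
    rw [fderiv_fun_add (h₀.isHomExt.differentiableAt two_ne_zero hcone)
      (h₁.isHomExt.differentiableAt two_ne_zero hcone), add_apply, h₀.isCapillaryF u hu,
      h₁.isCapillaryF u hu, add_zero]

lemma IsConvexCapillary.const_mul (h : IsConvexCapillary n θ g G) {c : ℝ} (hc : 0 ≤ c) :
    IsConvexCapillary n θ (fun ζ => c * g ζ) (fun x => c * G x) where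
  isHomExt := h.isHomExt.const_mul c
  tauNonneg u hu v := by
    rw [hessQ, fderiv_fderiv_const_mul]
    exact mul_nonneg hc (h.tauNonneg u hu v)
  isCapillaryF u hu := by
    have hcone := sphCap_subset_coneCap (sphCapBdry_subset_sphCap hu)
    rw [fderiv_const_mul (h.isHomExt.differentiableAt two_ne_zero hcone), smul_apply,
      h.isCapillaryF u hu, smul_zero]

lemma isConvexCapillary_inner (hz : z ∈ horiz n) :
    IsConvexCapillary n θ (fun ζ => ⟪ζ, z⟫) (fun x => ⟪x, z⟫) := by
  have hlinear : (fun x : V n => ⟪x, z⟫) = innerSL ℝ z :=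
    funext fun x => real_inner_comm z x
  refine ⟨isHomExt_inner hz, fun u _ v => ?_, fun u _ => ?_⟩
  · rw [hessQ, hlinear, fderiv_fderiv_continuousLinearMap]
    rfl
  · rw [hlinear, ContinuousLinearMap.fderiv, innerSL_apply_apply, inner_Etop, mem_horiz.1 hz]

lemma IsConvexCapillary.sub_inner (h : IsConvexCapillary n θ g G) (hz : z ∈ horiz n) :
    IsConvexCapillary n θ (fun ζ => g ζ - ⟪ζ, z⟫) (fun x => G x - ⟪x, z⟫) := by
  simpa only [inner_neg_right, ← sub_eq_add_neg] using
    h.add (isConvexCapillary_inner ((horiz n).neg_mem hz))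

lemma isBalanced_iff_forall_coord (hs : 0 ≤ sin θ) (hc : 0 < cos θ) {q : V n → ℝ}
    (hq : ContinuousOn q (sphCap n θ)) :
    IsBalanced n θ q ↔ ∀ i, i ≠ Fin.last n → ∫ u, q u * u i ∂capMeasure n θ = 0 := by
  constructor
  · intro h i hi
    simpa [EuclideanSpace.inner_single_right] using
      h (EuclideanSpace.single i 1) (mem_horiz.2 (by simp [hi.symm]))
  · intro h a ha
    have := isFiniteMeasure_capMeasure (n := n) hs hc
    have hint (i : Fin (n + 1)) : Integrable (fun u : V n => q u * u i) (capMeasure n θ) :=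
      integrable_of_continuousOn_of_ae_mem (isCompact_sphCap n θ) (ae_mem_sphCap n θ)
        (hq.mul (EuclideanSpace.proj (𝕜 := ℝ) i).continuous.continuousOn)
    have hexpand (u : V n) : q u * ⟪u, a⟫ = ∑ i, a i * (q u * u i) := by
      simp only [PiLp.inner_apply, RCLike.inner_apply, conj_trivial, Finset.mul_sum,
        mul_left_comm]
    simp only [hexpand]
    rw [integral_finsetSum _ fun i _ => (hint i).const_mul (a i)]
    refine Finset.sum_eq_zero fun i _ => ?_
    rw [integral_const_mul]
    rcases eq_or_ne i (Fin.last n) with rfl | hi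
    · rw [mem_horiz.1 ha, zero_mul]
    · rw [h i hi, mul_zero]

lemma IsHomExt.isBalanced_rpow_iff (hG : IsHomExt n θ m g G) (hs : 0 ≤ sin θ) (hc : 0 < cos θ)
    (hpos : ∀ ζ ∈ capCap n θ, 0 < g ζ) :
    IsBalanced n θ (fun u => G u ^ (-κ)) ↔
      ∀ i, i ≠ Fin.last n → ∫ ζ in capCap n θ, g ζ ^ (-κ) * ζ i ∂μH[(n : ℝ)] = 0 := by
  have hcont : ContinuousOn (fun u => G u ^ (-κ)) (sphCap n θ) :=
    hG.continuousOn.rpow_const fun u hu =>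
      Or.inl (hG.apply_eq hu ▸ (hpos _ (sub_mem_capCap hu)).ne')
  rw [isBalanced_iff_forall_coord hs hc hcont]
  refine forall₂_congr fun i hi => ?_
  rw [setIntegral_capCap_eq, integral_congr_ae]
  filter_upwards [ae_mem_sphCap n θ] with u hu
  simp [hG.apply_eq hu, Etop, hi]

/-- `g` is a positive convex capillary function for which `g ^ (-κ)` has vanishing horizontal
first moments on `C_θ`; `G` is the homogeneous extension of `g`. -/
structure IsBalancedCapillary (n : ℕ) (θ κ : ℝ) (g G : V n → ℝ) : Prop
    extends IsConvexCapillary n θ g G where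
  pos : ∀ ζ ∈ capCap n θ, 0 < g ζ
  integral_eq_zero : ∀ i, i ≠ Fin.last n →
    ∫ ζ in capCap n θ, g ζ ^ (-κ) * ζ i ∂μH[(n : ℝ)] = 0

lemma IsBalancedCapillary.apply_pos (h : IsBalancedCapillary n θ κ g G) (hu : u ∈ sphCap n θ) :
    0 < G u :=
  h.isHomExt.apply_eq hu ▸ h.pos _ (sub_mem_capCap hu)

lemma IsBalancedCapillary.isBalanced (h : IsBalancedCapillary n θ κ g G) (hs : 0 ≤ sin θ)
    (hc : 0 < cos θ) : IsBalanced n θ (fun u => G u ^ (-κ)) :=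
  (h.isHomExt.isBalanced_rpow_iff hs hc h.pos).2 h.integral_eq_zero

lemma IsBalancedCapillary.isCapillarySupport (h : IsBalancedCapillary n θ κ g G)
    (hs : 0 < sin θ) (hc : 0 < cos θ) : IsCapillarySupport n θ G :=
  h.isHomExt.isCapillarySupport h.tauNonneg h.isCapillaryF hs hc fun _ hu => (h.apply_pos hu).le

end CapillaryFunction

section UnitCap

variable {n : ℕ} {θ : ℝ}

lemma isHomExt_unitCap (m : ℕ∞) :
    IsHomExt n θ m (fun ζ => sin θ ^ 2 - cos θ * ζ (Fin.last n))
      (fun x => ‖x‖ - cos θ * x (Fin.last n)) := by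
  refine ⟨⟨{0}ᶜ, isOpen_compl_singleton, ?_, fun x hx => ?_⟩, fun l hl u _ => ?_, fun ζ hζ => ?_⟩
  · rintro _ ⟨l, hl, u, hu, rfl⟩
    exact smul_ne_zero hl.ne' (ne_zero_of_mem_sphCap hu)
  · have hlast :=
      (EuclideanSpace.proj (𝕜 := ℝ) (Fin.last n) : V n →L[ℝ] ℝ).contDiff (n := (m : WithTop ℕ∞))
    exact ((contDiffAt_norm ℝ hx).sub (contDiff_const.mul hlast).contDiffAt).contDiffWithinAt
  · simp only [norm_smul, Real.norm_of_nonneg hl.le, PiLp.smul_apply, smul_eq_mul]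
    ring
  · simp only [hζ.2, sin_sq, PiLp.add_apply, PiLp.smul_apply, Etop_last, smul_eq_mul]
    ring

lemma isConvexCapillary_unitCap :
    IsConvexCapillary n θ (fun ζ => sin θ ^ 2 - cos θ * ζ (Fin.last n))
      (fun x => ‖x‖ - cos θ * x (Fin.last n)) := by
  have hsplit : (fun x : V n => ‖x‖ - cos θ * x (Fin.last n)) =
      fun x => ‖x‖ + (-cos θ • EuclideanSpace.proj (𝕜 := ℝ) (Fin.last n) : V n →L[ℝ] ℝ) x := by
    ext x
    simp [sub_eq_add_neg]
  refine ⟨isHomExt_unitCap 2, fun u hu v => ?_, fun u hu => ?_⟩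
  · rw [hessQ, hsplit, fderiv_fderiv_add (contDiffAt_norm ℝ (ne_zero_of_mem_sphCap hu))
      (ContinuousLinearMap.contDiff _).contDiffAt, fderiv_fderiv_continuousLinearMap, add_zero,
      fderiv_fderiv_norm_apply hu.1, sub_nonneg]
    simpa [hu.1] using real_inner_mul_inner_self_le u v
  · have hne := ne_zero_of_mem_sphCap (sphCapBdry_subset_sphCap hu)
    rw [hsplit, fderiv_fun_add (hasFDerivAt_norm hne).differentiableAt
      (ContinuousLinearMap.differentiableAt _), (hasFDerivAt_norm hne).fderiv,
      ContinuousLinearMap.fderiv]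
    simp [hu.1, hu.2, inner_Etop, Etop_last]

lemma isBalanced_of_mirror_eq {q : V n → ℝ}
    (hmirror : ∀ e ∈ horiz n, ∀ u, q (mirror e u) = q u) : IsBalanced n θ q := by
  intro e he
  have h := (measurePreserving_mirror_capMeasure (θ := θ) he).integral_comp
    (mirror e).toHomeomorph.measurableEmbedding (fun u => q u * ⟪u, e⟫)
  simp only [inner_mirror_self, hmirror e he, mul_neg, integral_neg] at h
  exact neg_eq_self.1 h

lemma isBalancedCapillary_unitCap (hs : 0 < sin θ) (hc : 0 < cos θ) (κ : ℝ) :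
    IsBalancedCapillary n θ κ (fun ζ => sin θ ^ 2 - cos θ * ζ (Fin.last n))
      (fun x => ‖x‖ - cos θ * x (Fin.last n)) := by
  have hpos : ∀ ζ ∈ capCap n θ, 0 < sin θ ^ 2 - cos θ * ζ (Fin.last n) := fun ζ hζ => by
    have hle : ζ (Fin.last n) + cos θ ≤ 1 := by
      simpa [Etop_last, hζ.2] using (le_abs_self _).trans
        (PiLp.norm_apply_le (ζ + cos θ • Etop n) (Fin.last n))
    nlinarith [sin_sq_add_cos_sq θ, pow_pos hs 2]
  refine ⟨isConvexCapillary_unitCap, hpos,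
    ((isHomExt_unitCap 0).isBalanced_rpow_iff hs.le hc hpos).1 ?_⟩
  refine isBalanced_of_mirror_eq fun e he u => ?_
  rw [LinearIsometryEquiv.norm_map, mirror_last he]

end UnitCap

section Homotopy

variable {n : ℕ} {θ κ : ℝ}

theorem capillary_homotopy_path_general (hs : 0 < sin θ) (hc : 0 < cos θ) (hκ : 0 < κ)
    {g₀ g₁ G₀ G₁ : V n → ℝ} (h₀ : IsBalancedCapillary n θ κ g₀ G₀)
    (h₁ : IsBalancedCapillary n θ κ g₁ G₁) :
    ∃ z : ℝ → V n, z 0 = 0 ∧ z 1 = 0 ∧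
      (∀ t ∈ Icc (0 : ℝ) 1, z t (Fin.last n) = 0 ∧
        IsBalancedCapillary n θ κ (fun ζ => (1 - t) * g₀ ζ + t * g₁ ζ - ⟪ζ, z t⟫)
          (fun x => (1 - t) * G₀ x + t * G₁ x - ⟪x, z t⟫)) ∧
      ∃ C : ℝ, 1 ≤ C ∧ ∀ t ∈ Icc (0 : ℝ) 1, ∀ ζ ∈ capCap n θ,
        ((1 - t) * g₀ ζ + t * g₁ ζ - ⟪ζ, z t⟫) ^ (-κ) ∈ Icc (1 / C) C := by
  obtain ⟨z, hz0, hz1, m, M, hm, hz⟩ := exists_isBalanced_homotopy hκ hs hc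
    h₀.isHomExt.continuousOn h₁.isHomExt.continuousOn (h₀.isCapillarySupport hs hc)
    (h₁.isCapillarySupport hs hc) (fun _ => h₀.apply_pos) (fun _ => h₁.apply_pos)
    (h₀.isBalanced hs.le hc) (h₁.isBalanced hs.le hc)
  obtain ⟨C, hC1, hC⟩ := exists_forall_rpow_neg_mem_Icc (M := M) hκ.le hm
  have hconv (t : ℝ) (ht : t ∈ Icc (0 : ℝ) 1) : IsConvexCapillary n θ
      (fun ζ => (1 - t) * g₀ ζ + t * g₁ ζ - ⟪ζ, z t⟫)
      (fun x => (1 - t) * G₀ x + t * G₁ x - ⟪x, z t⟫) :=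
    ((h₀.const_mul (sub_nonneg.2 ht.2)).add (h₁.const_mul ht.1)).sub_inner (hz t ht).1
  have hmem (t : ℝ) (ht : t ∈ Icc (0 : ℝ) 1) (ζ : V n) (hζ : ζ ∈ capCap n θ) :
      (1 - t) * g₀ ζ + t * g₁ ζ - ⟪ζ, z t⟫ ∈ Icc m M := by
    have hval := (hconv t ht).isHomExt.2.2 ζ hζ
    beta_reduce at hval
    exact hval ▸ (hz t ht).2.2 _ (add_mem_sphCap hζ)
  have hpos (t : ℝ) (ht : t ∈ Icc (0 : ℝ) 1) (ζ : V n) (hζ : ζ ∈ capCap n θ) :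
      0 < (1 - t) * g₀ ζ + t * g₁ ζ - ⟪ζ, z t⟫ := hm.trans_le (hmem t ht ζ hζ).1
  exact ⟨z, hz0, hz1, fun t ht => ⟨mem_horiz.1 (hz t ht).1, hconv t ht, hpos t ht,
    ((hconv t ht).isHomExt.isBalanced_rpow_iff hs.le hc (hpos t ht)).1 (hz t ht).2.1⟩,
    C, hC1, fun t ht ζ hζ => hC _ (hmem t ht ζ hζ)⟩

end Homotopy

lemma isBalancedCapillary_rpow {n : ℕ} {θ κ : ℝ} (hκ : κ ≠ 0) {φ Ψ : V n → ℝ}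
    (hφ : ∀ ζ ∈ capCap n θ, 0 < φ ζ) (hΨ : IsConvexCapillary n θ (fun ζ => φ ζ ^ (-1 / κ)) Ψ)
    (hint : ∀ i, i ≠ Fin.last n → ∫ ζ in capCap n θ, φ ζ * ζ i ∂μH[(n : ℝ)] = 0) :
    IsBalancedCapillary n θ κ (fun ζ => φ ζ ^ (-1 / κ)) Ψ := by
  refine ⟨hΨ, fun ζ hζ => rpow_pos_of_pos (hφ ζ hζ) _, fun i hi => ?_⟩
  rw [← hint i hi, setIntegral_capCap_eq, setIntegral_capCap_eq]
  refine integral_congr_ae ((ae_mem_sphCap n θ).mono fun u hu => ?_)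
  have hexp : -1 / κ * -κ = 1 := by field_simp
  simp only [← rpow_mul (hφ _ (sub_mem_capCap hu)).le, hexp, rpow_one]

/-- the homotopy path for the continuity method. -/
theorem capillary_homotopy_path (n k : ℕ) (hn : 2 ≤ n) (θ : ℝ)
    (hθ : θ ∈ Ioo 0 (π / 2)) (hk : 1 ≤ k) (hkn : k < n)
    (φ Φ Ψ : V n → ℝ)
    (hφpos : ∀ ζ ∈ capCap n θ, 0 < φ ζ)
    (hΦ : IsHomExt n θ ⊤ φ Φ)
    (hΨ : IsHomExt n θ ⊤ (fun ζ => φ ζ ^ (-(1 : ℝ) / k)) Ψ)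
    (hτΨ : TauNonneg n θ Ψ)
    (hΨcap : IsCapillaryF n θ Ψ)
    (hint : ∀ i : Fin (n + 1), i ≠ Fin.last n →
      ∫ ζ in capCap n θ, φ ζ * ζ i ∂μH[(n : ℝ)] = 0) :
    ∃ z : ℝ → V n, z 0 = 0 ∧ z 1 = 0 ∧
      (∀ t ∈ Icc (0 : ℝ) 1,
        (z t) (Fin.last n) = 0 ∧
        (∀ ζ ∈ capCap n θ,
          0 < (1 - t) * (Real.sin θ ^ 2 - Real.cos θ * ζ (Fin.last n)) +
                t * φ ζ ^ (-(1 : ℝ) / k) - ⟪ζ, z t⟫) ∧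
        TauNonneg n θ (fun x =>
          (1 - t) * (‖x‖ - Real.cos θ * x (Fin.last n)) + t * Ψ x - ⟪x, z t⟫) ∧
        IsCapillaryF n θ (fun x =>
          (1 - t) * (‖x‖ - Real.cos θ * x (Fin.last n)) + t * Ψ x - ⟪x, z t⟫) ∧
        (∀ i : Fin (n + 1), i ≠ Fin.last n →
          ∫ ζ in capCap n θ,
            ((1 - t) * (Real.sin θ ^ 2 - Real.cos θ * ζ (Fin.last n)) +
              t * φ ζ ^ (-(1 : ℝ) / k) - ⟪ζ, z t⟫) ^ (-(k : ℝ)) * ζ i ∂μH[(n : ℝ)] = 0)) ∧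
      (∃ C : ℝ, 1 ≤ C ∧ ∀ t ∈ Icc (0 : ℝ) 1, ∀ ζ ∈ capCap n θ,
        1 / C ≤ ((1 - t) * (Real.sin θ ^ 2 - Real.cos θ * ζ (Fin.last n)) +
                  t * φ ζ ^ (-(1 : ℝ) / k) - ⟪ζ, z t⟫) ^ (-(k : ℝ)) ∧
        ((1 - t) * (Real.sin θ ^ 2 - Real.cos θ * ζ (Fin.last n)) +
          t * φ ζ ^ (-(1 : ℝ) / k) - ⟪ζ, z t⟫) ^ (-(k : ℝ)) ≤ C) :=
  have hs : 0 < sin θ := sin_pos_of_pos_of_lt_pi hθ.1 (by linarith [hθ.2, pi_pos])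
  have hc : 0 < cos θ := cos_pos_of_mem_Ioo ⟨by linarith [hθ.1, pi_pos], hθ.2⟩
  have hk0 : (0 : ℝ) < k := Nat.cast_pos.2 hk
  let ⟨z, hz0, hz1, hz, C, hC1, hC⟩ := capillary_homotopy_path_general hs hc hk0
    (isBalancedCapillary_unitCap hs hc k)
    (isBalancedCapillary_rpow hk0.ne' hφpos ⟨hΨ.of_le le_top, hτΨ, hΨcap⟩ hint)
  ⟨z, hz0, hz1, fun t ht => ⟨(hz t ht).1, (hz t ht).2.pos, (hz t ht).2.tauNonneg,
    (hz t ht).2.isCapillaryF, (hz t ht).2.integral_eq_zero⟩, C, hC1, hC⟩
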